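/- arXiv:1209.5137 — 2 statements merged into one kernel-verified Lean document; each statement's English description precedes it below -/
import Mathlib

section
/- Let $p(X) = X^4(X^2 + 6X + 25) \in \mathbb{C}[X]$. The Galois group of the polynomial $p(Y) - t$ in the variable $Y$ over the field $\mathbb{C}(t)$ of rational functions is isomorphic as a group to $PGL_2(\mathbb{F}_5)$, the quotient of $GL_2(\mathbb{F}_5)$ by its center. -/
/-!
The group `PGL₂(𝔽₅)` is the symmetric group `S₅` in its exotic action on six points, so the
Galois closure of the sextic `p(Y) = t` over `ℂ(t)` should also be the Galois closure of a quintic.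
Matching ramification (`(4,1,1)`, `(2,2,1,1)`, `6` for the sextic corresponds to `(4,1)`, `(2,2,1)`,
`(3,2)` for the quintic) singles out the quintic `(Z - 2)⁴(Z - 27) = t Z²`.

Let `L` be the splitting field of the quintic, with roots `z₀, …, z₄`.

* Its discriminant is `64 t³ (27 t + 50000)²` (`disc_sq`), so `L` contains a square root `τ` of `t`,
  namely `τ = δ / (8 t (27 t + 50000))` with `δ` the Vandermonde determinant. As `t` is not a square
  in `ℂ(t)`, some element of the Galois group acts on the roots as an odd permutation.
* Cayley's resolvent element `d`, the sum of `zᵢzⱼ` over the sides of a pentagon minus the sum over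
  its diagonals, satisfies an explicit sextic relation `A(d²) = 32 δ d` (`cyclic_resolvent`).
  From `d` and `τ` one obtains rationally a root of `p(Y) - t` in `L` (`exists_sextic_root`).
* Both the sextic and the quintic are linear in `t`, hence irreducible over `ℂ(t)` by Gauss's lemma
  (`irreducible_pencil`). So `30` divides the order of `Gal(L/ℂ(t)) ≤ S₅`; together with the odd
  permutation this forces `Gal(L/ℂ(t)) = S₅` (`perm_eq_top`).
* The Galois group of `p(Y) - t` is a quotient of `S₅` of order divisible by `6`, so it is `S₅`,
  because every nontrivial normal subgroup of `S₅` contains `A₅` (`nonempty_gal`).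

Finally, `S₅ ≃ PGL₂(𝔽₅)` (`nonempty_pgl`) comes from the action of `GL₂(𝔽₅)` on the five cosets of
the normalizer of a quaternion subgroup.
-/

open Polynomial

/-- The monodromy group of a complex polynomial `p`: the Galois group of `p(Y) - t`
over the field `ℂ(t)` of rational functions. -/
noncomputable def monodromyGroup (p : Polynomial ℂ) : Type :=
  (p.map (algebraMap ℂ (RatFunc ℂ)) - C RatFunc.X).Gal

noncomputable instance (p : Polynomial ℂ) : Group (monodromyGroup p) :=
  inferInstanceAs (Group (p.map (algebraMap ℂ (RatFunc ℂ)) - C RatFunc.X).Gal)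

/-! ### Irreducibility of the sextic and the quintic -/

/-- A polynomial `A(Y) - t B(Y)` with `A`, `B` coprime is irreducible over `ℂ(t)`: it has degree one
in `t`, so it is irreducible in `ℂ[Y][t]`, and Gauss's lemma applies. -/
theorem irreducible_pencil (A B : ℂ[X]) (hA : A.Monic) (hdeg : B.degree < A.degree)
    (h0 : B ≠ 0) (hAB : IsCoprime A B) :
    Irreducible (A.map (algebraMap ℂ (RatFunc ℂ)) -
      C RatFunc.X * B.map (algebraMap ℂ (RatFunc ℂ))) := by
  set φ : ℂ[X][X] := A.map C - C X * B.map C with hφ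
  have hmon : φ.Monic := by
    apply (hA.map C).sub_of_left
    rw [degree_map_eq_of_injective C_injective, degree_C_mul (X_ne_zero),
      degree_map_eq_of_injective C_injective]
    exact hdeg
  have hirr : Irreducible φ := by
    have : φ = Bivariate.swap (C A - X * C B) := by
      have hX : Bivariate.swap (X : ℂ[X][X]) = C X := Bivariate.swap_Y
      rw [hφ, map_sub, map_mul, Bivariate.swap_C, Bivariate.swap_C, hX]
    rw [this, MulEquiv.irreducible_iff]
    have h2 := irreducible_C_mul_X_add_C (neg_ne_zero.mpr h0)
      ((IsCoprime.neg_right_iff _ _).mpr hAB).symm.isRelPrime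
    convert h2 using 1
    rw [map_neg, X_mul_C]; ring
  have h := (hmon.irreducible_iff_irreducible_map_fraction_map (K := RatFunc ℂ)).1 hirr
  convert h using 1
  simp only [hφ, Polynomial.map_sub, Polynomial.map_mul, Polynomial.map_map, map_C,
    RatFunc.algebraMap_X]
  rfl

theorem irr_P : Irreducible ((X ^ 4 * (X ^ 2 + C 6 * X + C 25) : ℂ[X]).map
    (algebraMap ℂ (RatFunc ℂ)) - C RatFunc.X) := by
  have := irreducible_pencil (X ^ 4 * (X ^ 2 + C 6 * X + C 25)) 1 (by monicity!)
    (by rw [show (X ^ 4 * (X ^ 2 + C 6 * X + C 25) : ℂ[X]).degree = 6 by compute_degree!]; simp)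
    one_ne_zero isCoprime_one_right
  simpa using this

/-- The auxiliary quintic `(Z - 2)⁴(Z - 27) - t Z²`, written out by powers of `Z`. -/
noncomputable def quintic : (RatFunc ℂ)[X] :=
  X ^ 5 - C 35 * X ^ 4 + C 240 * X ^ 3 - C (680 + RatFunc.X) * X ^ 2 + C 880 * X - C 432

theorem irr_quintic : Irreducible quintic := by
  have := irreducible_pencil ((X - C 2) ^ 4 * (X - C 27)) (X ^ 2) (by monicity!)
    (by
      rw [show ((X - C 2) ^ 4 * (X - C 27) : ℂ[X]).degree = 5 by compute_degree!]
      rw [degree_X_pow]; norm_num)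
    (by simp)
    (by
      have h2 : ∀ a : ℂ, a ≠ 0 → IsCoprime (X - C a) X := fun a ha => by
        refine ⟨-C a⁻¹, C a⁻¹, ?_⟩
        have : C a⁻¹ * C a = (1 : ℂ[X]) := by rw [← C_mul, inv_mul_cancel₀ ha, C_1]
        linear_combination this
      exact ((h2 2 (by norm_num)).pow_left.mul_left (h2 27 (by norm_num))).pow_right)
  convert this using 1
  have e2 : algebraMap ℂ (RatFunc ℂ) 2 = 2 := map_ofNat _ 2
  have e27 : algebraMap ℂ (RatFunc ℂ) 27 = 27 := map_ofNat _ 27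
  simp only [quintic, Polynomial.map_mul, Polynomial.map_sub, Polynomial.map_pow, map_C, map_X,
    e2, e27]
  simp only [map_ofNat, map_add]
  ring

/-! ### Cayley's resolvent and the discriminant of the quintic -/

/-- Cayley's resolvent relation for the five points `x0, x1, x2, x3, 0`, in terms of the elementary
symmetric functions `f1, …, f4`; `d` is the sum over the sides of a pentagon minus the sum over its
diagonals. -/
theorem cayley {R : Type*} [CommRing R] (x0 x1 x2 x3 f1 f2 f3 f4 d : R)
    (h1 : f1 = x0+x1+x2+x3)
    (h2 : f2 = x0*x1+x0*x2+x0*x3+x1*x2+x1*x3+x2*x3)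
    (h3 : f3 = x0*x1*x2+x0*x1*x3+x0*x2*x3+x1*x2*x3)
    (h4 : f4 = x0*x1*x2*x3)
    (hd : d = x0*x1+x1*x2+x2*x3-x0*x2-x1*x3-x3*x0) :
    d^6 + (-20*f4-3*f2^2+8*f1*f3)*d^4
     + (240*f4^2+16*f2*f3^2-8*f2^2*f4+3*f2^4-112*f1*f3*f4-16*f1*f2^2*f3+16*f1^2*f3^2
        +16*f1^2*f2*f4)*d^2
     + (320*f4^3-64*f3^4+224*f2*f3^2*f4-176*f2^2*f4^2-16*f2^3*f3^2+28*f2^4*f4-f2^6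
        -64*f1*f3*f4^2+64*f1*f2*f3^3-112*f1*f2^2*f3*f4+8*f1*f2^4*f3-128*f1^2*f3^2*f4
        +224*f1^2*f2*f4^2-16*f1^2*f2^2*f3^2-16*f1^2*f2^3*f4+64*f1^3*f2*f3*f4-64*f1^4*f4^2)
     = 32 * ((x0-x1)*(x0-x2)*(x0-x3)*x0*(x1-x2)*(x1-x3)*x1*(x2-x3)*x2*x3) * d := by
  -- In terms of the sums and products of the pairs `{x0, x3}`, `{x1, x2}`, everything takes
  -- the form `α + β v` with `v²` known; the parts of the relation without and with `v` are then
  -- verified separately.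
  obtain ⟨a, ha⟩ : ∃ a, a = x0 + x3 := ⟨_, rfl⟩
  obtain ⟨m, hm⟩ : ∃ m, m = x0 * x3 := ⟨_, rfl⟩
  obtain ⟨b, hb⟩ : ∃ b, b = x1 + x2 := ⟨_, rfl⟩
  obtain ⟨n, hn⟩ : ∃ n, n = x1 * x2 := ⟨_, rfl⟩
  obtain ⟨v, hv⟩ : ∃ v, v = (x0 - x3) * (x1 - x2) := ⟨_, rfl⟩
  have hv2 : v ^ 2 = (a^2-4*m)*(b^2-4*n) := by subst ha hm hb hn hv; ring
  have h1' : f1 = a + b := by subst ha hm hb hn hv; rw [h1]; ring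
  have h2' : f2 = m + n + a * b := by subst ha hm hb hn hv; rw [h2]; ring
  have h3' : f3 = a * n + b * m := by subst ha hm hb hn hv; rw [h3]; ring
  have h4' : f4 = m * n := by subst ha hm hb hn hv; rw [h4]; ring
  have hd' : d = v + (n - m) := by subst ha hm hb hn hv; rw [hd]; ring
  have hδ : (x0-x1)*(x0-x2)*(x0-x3)*x0*(x1-x2)*(x1-x3)*x1*(x2-x3)*x2*x3
      = v * (m * n * ((m - n)^2 + (a - b) * (a * n - b * m))) := by
    subst ha hm hb hn hv; ring
  rw [hδ]
  clear hδ h1 h2 h3 h4 hd ha hm hb hn hv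
  obtain ⟨V, hV⟩ : ∃ V, V = (a^2-4*m)*(b^2-4*n) := ⟨_, rfl⟩
  rw [← hV] at hv2
  have d2 : d ^ 2 = (V + (n-m)^2) + 2 * (n-m) * v := by rw [hd']; linear_combination hv2
  obtain ⟨α, hα⟩ : ∃ α, α = V + (n-m)^2 := ⟨_, rfl⟩
  obtain ⟨β, hβ⟩ : ∃ β, β = 2 * (n-m) := ⟨_, rfl⟩
  rw [← hα, ← hβ] at d2
  have d4 : d ^ 4 = (α^2 + β^2*V) + 2*α*β*v := by
    linear_combination (d^2 + α + β*v) * d2 + β^2 * hv2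
  have d6 : d ^ 6 = (α^3+3*α*β^2*V) + (3*α^2*β+β^3*V) * v := by
    linear_combination d^4 * d2 + (α+β*v) * d4 + 2*α*β^2 * hv2
  rw [d2, d4, d6, h1', h2', h3', h4', hd']
  have even : (α^3+3*α*β^2*V) + (-20*(m*n)-3*(m+n+a*b)^2+8*(a+b)*(a*n+b*m))*(α^2 + β^2*V)
     + (240*(m*n)^2+16*(m+n+a*b)*(a*n+b*m)^2-8*(m+n+a*b)^2*(m*n)+3*(m+n+a*b)^4
        -112*(a+b)*(a*n+b*m)*(m*n)-16*(a+b)*(m+n+a*b)^2*(a*n+b*m)+16*(a+b)^2*(a*n+b*m)^2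
        +16*(a+b)^2*(m+n+a*b)*(m*n))*α
     + (320*(m*n)^3-64*(a*n+b*m)^4+224*(m+n+a*b)*(a*n+b*m)^2*(m*n)-176*(m+n+a*b)^2*(m*n)^2
        -16*(m+n+a*b)^3*(a*n+b*m)^2+28*(m+n+a*b)^4*(m*n)-(m+n+a*b)^6
        -64*(a+b)*(a*n+b*m)*(m*n)^2+64*(a+b)*(m+n+a*b)*(a*n+b*m)^3
        -112*(a+b)*(m+n+a*b)^2*(a*n+b*m)*(m*n)+8*(a+b)*(m+n+a*b)^4*(a*n+b*m)
        -128*(a+b)^2*(a*n+b*m)^2*(m*n)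
        +224*(a+b)^2*(m+n+a*b)*(m*n)^2-16*(a+b)^2*(m+n+a*b)^2*(a*n+b*m)^2
        -16*(a+b)^2*(m+n+a*b)^3*(m*n)+64*(a+b)^3*(m+n+a*b)*(a*n+b*m)*(m*n)-64*(a+b)^4*(m*n)^2)
     = 32 * (m * n * ((m - n)^2 + (a - b) * (a * n - b * m))) * V := by
    subst hα hβ hV; ring
  have odd : (3*α^2*β+β^3*V) + (-20*(m*n)-3*(m+n+a*b)^2+8*(a+b)*(a*n+b*m))*(2*α*β)
     + (240*(m*n)^2+16*(m+n+a*b)*(a*n+b*m)^2-8*(m+n+a*b)^2*(m*n)+3*(m+n+a*b)^4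
        -112*(a+b)*(a*n+b*m)*(m*n)-16*(a+b)*(m+n+a*b)^2*(a*n+b*m)+16*(a+b)^2*(a*n+b*m)^2
        +16*(a+b)^2*(m+n+a*b)*(m*n))*β
     = 32 * (m * n * ((m - n)^2 + (a - b) * (a * n - b * m))) * (n - m) := by
    subst hα hβ hV; ring
  linear_combination even + v * odd - 32 * (m * n * ((m - n)^2 + (a - b) * (a * n - b * m))) * hv2

/-- The discriminant of the quintic. On a root `x` the derivative satisfies
`x Q'(x) = (x - 2)³ (3x² - 52x - 108)`, and the product of each linear factor over the roots is,
up to sign and a constant, a value of `Q`; the element `s = √10` is used to factor `3x² - 52x - 108`. -/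
theorem disc_sq {L : Type*} [Field L] [CharZero L] (t s z0 z1 z2 z3 z4 : L) (hs : s ^ 2 = 10)
    (h1 : z0+z1+z2+z3+z4 = 35)
    (h2 : z0*z1+z0*z2+z0*z3+z0*z4+z1*z2+z1*z3+z1*z4+z2*z3+z2*z4+z3*z4 = 240)
    (h3 : z0*z1*z2+z0*z1*z3+z0*z1*z4+z0*z2*z3+z0*z2*z4+z0*z3*z4+z1*z2*z3+z1*z2*z4+z1*z3*z4
      +z2*z3*z4 = 680 + t)
    (h4 : z0*z1*z2*z3+z0*z1*z2*z4+z0*z1*z3*z4+z0*z2*z3*z4+z1*z2*z3*z4 = 880)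
    (h5 : z0*z1*z2*z3*z4 = 432) :
    ((z0-z1)*(z0-z2)*(z0-z3)*(z0-z4)*(z1-z2)*(z1-z3)*(z1-z4)*(z2-z3)*(z2-z4)*(z3-z4)) ^ 2
      = 64 * t ^ 3 * (27 * t + 50000) ^ 2 := by
  have hev : ∀ x : L, (x-z0)*(x-z1)*(x-z2)*(x-z3)*(x-z4)
      = x^5-35*x^4+240*x^3-(680+t)*x^2+880*x-432 := fun x => by
    linear_combination -x^4*h1 + x^3*h2 - x^2*h3 + x*h4 - h5
  have hprod : ∀ x : L, (z0-x)*(z1-x)*(z2-x)*(z3-x)*(z4-x)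
      = -(x^5-35*x^4+240*x^3-(680+t)*x^2+880*x-432) := fun x => by
    linear_combination -hev x
  have hder : ∀ x : L, (x-z1)*(x-z2)*(x-z3)*(x-z4)+(x-z0)*(x-z2)*(x-z3)*(x-z4)
      +(x-z0)*(x-z1)*(x-z3)*(x-z4)+(x-z0)*(x-z1)*(x-z2)*(x-z4)+(x-z0)*(x-z1)*(x-z2)*(x-z3)
      = 5*x^4-140*x^3+720*x^2-2*(680+t)*x+880 := fun x => by
    linear_combination -4*x^3*h1 + 3*x^2*h2 - 2*x*h3 + h4
  have key : ∀ x : L, x^5-35*x^4+240*x^3-(680+t)*x^2+880*x-432 = 0 →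
      x * (5*x^4-140*x^3+720*x^2-2*(680+t)*x+880) = (x-2)^3*(3*x^2-52*x-108) := fun x hx => by
    linear_combination 2 * hx
  have k0 := key z0 (by rw [← hev]; ring)
  have k1 := key z1 (by rw [← hev]; ring)
  have k2 := key z2 (by rw [← hev]; ring)
  have k3 := key z3 (by rw [← hev]; ring)
  have k4 := key z4 (by rw [← hev]; ring)
  rw [← hder] at k0 k1 k2 k3 k4
  have p2 := hprod 2
  have p3 := hprod ((26+10*s)/3)
  have p4 := hprod ((26-10*s)/3)
  have hq : ∀ x : L, 3*x^2-52*x-108 = 3*(x-(26+10*s)/3)*(x-(26-10*s)/3) := fun x => by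
    linear_combination (100/3 : L) * hs
  rw [hq] at k0 k1 k2 k3 k4
  have hρ : ∀ σ : L, σ ^ 2 = 10 → (27 : L) * (((26+10*σ)/3)^5-35*((26+10*σ)/3)^4
      +240*((26+10*σ)/3)^3-(680+t)*((26+10*σ)/3)^2
      +880*((26+10*σ)/3)-432) = -((26+10*σ)/3)^2*(27*t+50000) := by
    intro σ hσ
    have h3 : σ^3 = 10*σ := by linear_combination σ * hσ
    have h4 : σ^4 = 100 := by linear_combination (σ^2+10) * hσ
    have h5 : σ^5 = 100*σ := by linear_combination σ * h4
    ring_nf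
    rw [h3, h4, h5, hσ]
    ring
  have r3 := hρ s hs
  have r4 := hρ (-s) (by rw [neg_sq, hs])
  rw [show (26 + 10 * -s)/3 = (26-10*s)/3 by ring] at r4
  have p3' : 27 * ((z0-(26+10*s)/3)*(z1-(26+10*s)/3)*(z2-(26+10*s)/3)*(z3-(26+10*s)/3)
      *(z4-(26+10*s)/3)) = ((26+10*s)/3)^2*(27*t+50000) := by
    rw [p3]; linear_combination -r3
  have p4' : 27 * ((z0-(26-10*s)/3)*(z1-(26-10*s)/3)*(z2-(26-10*s)/3)*(z3-(26-10*s)/3)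
      *(z4-(26-10*s)/3)) = ((26-10*s)/3)^2*(27*t+50000) := by
    rw [p4]; linear_combination -r4
  have hrho : ((26+10*s)/3)*((26-10*s)/3) = -36 := by linear_combination (-100/9 : L) * hs
  clear r3 r4 p3 p4 hρ hq key hder hprod hev
  generalize (26+10*s)/3 = ρ at *
  generalize (26-10*s)/3 = μ at *
  have hA : (432 : L) * 27^2 * ((z0-z1)*(z0-z2)*(z0-z3)*(z0-z4)*(z1-z2)*(z1-z3)*(z1-z4)
      *(z2-z3)*(z2-z4)*(z3-z4)) ^ 2 = 432 * 27^2 * (64 * t ^ 3 * (27 * t + 50000) ^ 2) := by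
    simp only [sub_self, mul_zero, zero_mul, zero_add, add_zero] at k0 k1 k2 k3 k4
    have a1 : ∀ a b c d e f g h i j : L, (z0*(a*b*c*d))*(z1*(-a*e*f*g))*(z2*(-b*-e*h*i))
        *(z3*(-c*-f*-h*j))*(z4*(-d*-g*-i*-j))
        = (z0*z1*z2*z3*z4)*(a*b*c*d*e*f*g*h*i*j)^2 := by intros; ring
    have a1' := a1 (z0-z1) (z0-z2) (z0-z3) (z0-z4) (z1-z2) (z1-z3) (z1-z4) (z2-z3) (z2-z4) (z3-z4)
    simp only [neg_sub] at a1'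
    have a2 : ∀ a b c d e a₁ b₁ c₁ d₁ e₁ a₂ b₂ c₂ d₂ e₂ : L,
        (a^3*(3*a₁*a₂))*(b^3*(3*b₁*b₂))*(c^3*(3*c₁*c₂))*(d^3*(3*d₁*d₂))*(e^3*(3*e₁*e₂))
        = 243*(a*b*c*d*e)^3*(a₁*b₁*c₁*d₁*e₁)*(a₂*b₂*c₂*d₂*e₂) := by intros; ring
    rw [k0, k1, k2, k3, k4, a2, h5, p2] at a1'
    rw [mul_right_comm, ← a1']
    calc _ = 243 * (4*t)^3 * (27 * ((z0-ρ)*(z1-ρ)*(z2-ρ)*(z3-ρ)*(z4-ρ)))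
        * (27 * ((z0-μ)*(z1-μ)*(z2-μ)*(z3-μ)*(z4-μ))) := by
          generalize (z0-ρ)*(z1-ρ)*(z2-ρ)*(z3-ρ)*(z4-ρ) = A
          generalize (z0-μ)*(z1-μ)*(z2-μ)*(z3-μ)*(z4-μ) = B
          ring
      _ = 243 * (4*t)^3 * (ρ*μ)^2 * (27*t+50000)^2 := by rw [p3', p4']; ring
      _ = _ := by rw [hrho]; ring
  exact mul_left_cancel₀ (by norm_num) hA

/-- Cayley's relation for the roots of the quintic: shift the roots so that `z4` becomes `0`, apply
`cayley`, and reduce the coefficients modulo `Q(z4) = 0`. -/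
theorem cyclic_resolvent {R : Type*} [CommRing R] (t z0 z1 z2 z3 z4 d : R)
    (h1 : z0+z1+z2+z3+z4 = 35)
    (h2 : z0*z1+z0*z2+z0*z3+z0*z4+z1*z2+z1*z3+z1*z4+z2*z3+z2*z4+z3*z4 = 240)
    (h3 : z0*z1*z2+z0*z1*z3+z0*z1*z4+z0*z2*z3+z0*z2*z4+z0*z3*z4+z1*z2*z3+z1*z2*z4+z1*z3*z4
      +z2*z3*z4 = 680 + t)
    (h4 : z0*z1*z2*z3+z0*z1*z2*z4+z0*z1*z3*z4+z0*z2*z3*z4+z1*z2*z3*z4 = 880)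
    (h5 : z0*z1*z2*z3*z4 = 432)
    (hd : d = z0*z1+z1*z2+z2*z3+z3*z4+z4*z0-z0*z2-z1*z3-z2*z4-z3*z0-z4*z1) :
    d^6 + 280*t*d^4 + (23440*t^2-4000000*t)*d^2 + (-64*t^4+363520*t^3-512000000*t^2)
      = 32 * ((z0-z1)*(z0-z2)*(z0-z3)*(z0-z4)*(z1-z2)*(z1-z3)*(z1-z4)*(z2-z3)*(z2-z4)*(z3-z4))
        * d := by
  have hQ : z4^5-35*z4^4+240*z4^3-(680+t)*z4^2+880*z4-432 = 0 := by
    linear_combination z4^4*h1 - z4^3*h2 + z4^2*h3 - z4*h4 + h5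
  have hc := cayley (z0-z4) (z1-z4) (z2-z4) (z3-z4) (35-5*z4) (10*z4^2-140*z4+240)
    (-(10*z4^3-210*z4^2+720*z4-680-t)) (5*z4^4-140*z4^3+720*z4^2-1360*z4-2*t*z4+880) d
    (by linear_combination -h1) (by linear_combination -h2 + 4*z4*h1)
    (by linear_combination -h3 + 3*z4*h2 - 6*z4^2*h1)
    (by linear_combination -h4 + 2*z4*h3 - 3*z4^2*h2 + 4*z4^3*h1)
    (by rw [hd]; ring)
  simp only [sub_sub_sub_cancel_right] at hc
  rw [← hc]
  clear hc hd h1 h2 h3 h4 h5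
  generalize z4 = w at *
  obtain ⟨q, hq⟩ : ∃ q, q = w^5-35*w^4+240*w^3-(680+t)*w^2+880*w-432 := ⟨_, rfl⟩
  rw [← hq] at hQ
  obtain ⟨f1, hf1⟩ : ∃ x, x = 35-5*w := ⟨_, rfl⟩
  obtain ⟨f2, hf2⟩ : ∃ x, x = 10*w^2-140*w+240 := ⟨_, rfl⟩
  obtain ⟨f3, hf3⟩ : ∃ x, x = -(10*w^3-210*w^2+720*w-680-t) := ⟨_, rfl⟩
  obtain ⟨f4, hf4⟩ : ∃ x, x = 5*w^4-140*w^3+720*w^2-1360*w-2*t*w+880 := ⟨_, rfl⟩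
  have A2 : -20*f4-3*f2^2+8*f1*f3 = 280*t := by
    subst hf1 hf2 hf3 hf4; ring
  have A4 : 240*f4^2+16*f2*f3^2-8*f2^2*f4+3*f2^4-112*f1*f3*f4-16*f1*f2^2*f3+16*f1^2*f3^2
        +16*f1^2*f2*f4 = 23440*t^2-4000000*t + (-400*t-1000000)*q := by
    subst hf1 hf2 hf3 hf4 hq; ring
  have A6 : 320*f4^3-64*f3^4+224*f2*f3^2*f4-176*f2^2*f4^2-16*f2^3*f3^2+28*f2^4*f4-f2^6
        -64*f1*f3*f4^2+64*f1*f2*f3^3-112*f1*f2^2*f3*f4+8*f1*f2^4*f3-128*f1^2*f3^2*f4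
        +224*f1^2*f2*f4^2-16*f1^2*f2^2*f3^2-16*f1^2*f2^3*f4+64*f1^3*f2*f3*f4-64*f1^4*f4^2
      = -64*t^4+363520*t^3-512000000*t^2 + (-1000000*q+22400*t^2-32000000*t)*q := by
    subst hf1 hf2 hf3 hf4 hq; ring
  rw [← hf1, ← hf2, ← hf3, ← hf4, A2, A4, A6, hQ]
  ring

/-- Cayley's relation, together with a square root `τ` of `t`, yields a root of
`Y⁴(Y² + 6Y + 25) = t`. With `S = d / (2τ) - 1`, powers of a solution `y` of `y² = S y + 10`
are linear in `y`, and `y⁴(y² + 6y + 25) = U y + V` with `U`, `V` polynomials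
in `S`. Cayley's relation says exactly that `y = (t - V) / U` solves the quadratic equation. -/
theorem exists_sextic_root {L : Type*} [Field L] [Algebra ℂ L] (t τ d : L)
    (ht : Transcendental ℂ t) (hτ : τ ^ 2 = t)
    (hd : d^6 + 280*t*d^4 + (23440*t^2-4000000*t)*d^2 + (-64*t^4+363520*t^3-512000000*t^2)
      = 32 * (8 * t * (27 * t + 50000) * τ) * d) :
    ∃ y : L, y ^ 4 * (y ^ 2 + 6 * y + 25) = t := by
  have : CharZero L := charZero_of_injective_algebraMap (algebraMap ℂ L).injective
  have ht0 : t ≠ 0 := by rintro rfl; exact ht isAlgebraic_zero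
  have hτ0 : τ ≠ 0 := by rintro rfl; apply ht0; rw [← hτ]; ring
  obtain ⟨h, hh⟩ : ∃ h, d = 2 * τ * h := ⟨d / (2 * τ), by field_simp⟩
  have hh6 : t^2 - t*(h^6+70*h^4+1465*h^2-216*h+5680) + (250000*h^2+400000*h+8000000) = 0 := by
    have e2 : d^2 = 4*t*h^2 := by rw [hh, ← hτ]; ring
    have e4 : d^4 = 16*t^2*h^4 := by rw [hh, ← hτ]; ring
    have e6 : d^6 = 64*t^3*h^6 := by rw [hh, ← hτ]; ring
    have e1 : 32 * (8 * t * (27 * t + 50000) * τ) * d = 512*t^2*(27*t+50000)*h := by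
      rw [hh, ← hτ]; ring
    rw [e1, e2, e4, e6] at hd
    apply mul_left_cancel₀ (a := -64*t^2) (by simp [ht0])
    linear_combination hd
  obtain ⟨S, rfl⟩ : ∃ S, h = S + 1 := ⟨h - 1, by ring⟩
  obtain ⟨U, hU⟩ : ∃ U, U = (S^5+40*S^3+300*S) + 6*(S^4+30*S^2+100) + 25*(S^3+20*S) := ⟨_, rfl⟩
  obtain ⟨V, hV⟩ : ∃ V, V = (10*S^4+300*S^2+1000) + 6*(10*S^3+200*S) + 25*(10*S^2+100) := ⟨_, rfl⟩
  have hUV : (t-V)^2 - S*(t-V)*U - 10*U^2 = 0 := by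
    rw [hU, hV]; linear_combination hh6
  -- If `U` vanished, then `S`, and hence `t = V`, would be algebraic over `ℂ`.
  have hU0 : U ≠ 0 := by
    intro h0
    have htV : t = V := by
      rw [h0] at hUV
      have : (t - V)^2 = 0 := by linear_combination hUV
      exact sub_eq_zero.1 (pow_eq_zero_iff two_ne_zero |>.1 this)
    have hS : IsAlgebraic ℂ S := by
      refine ⟨X^5+C 6*X^4+C 65*X^3+C 180*X^2+C 800*X+C 600, ?_, ?_⟩
      · apply Monic.ne_zero
        monicity!
      · simp only [map_add, map_mul, map_pow, aeval_X, map_ofNat]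
        rw [← h0, hU]; ring
    apply ht
    have hn : ∀ n : ℕ, [n.AtLeastTwo] → IsAlgebraic ℂ (OfNat.ofNat n : L) := fun n _ => by
      rw [← map_ofNat (algebraMap ℂ L) n]; exact isAlgebraic_algebraMap _
    have hVS : V = 10*S^4+60*S^3+550*S^2+1200*S+3500 := by rw [hV]; ring
    rw [htV, hVS]
    exact (((((hn 10).mul (hS.pow 4)).add ((hn 60).mul (hS.pow 3))).add
      ((hn 550).mul (hS.pow 2))).add ((hn 1200).mul hS)).add (hn 3500)
  obtain ⟨y, hy⟩ : ∃ y, t = U * y + V := ⟨(t - V) / U, by field_simp; ring⟩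
  have hyS : y^2 = S*y+10 := by
    apply mul_left_cancel₀ (pow_ne_zero 2 hU0)
    rw [hy] at hUV
    linear_combination hUV
  refine ⟨y, ?_⟩
  rw [hy, hU, hV]
  have y4 : y^4 = (S^3+20*S)*y + (10*S^2+100) := by
    linear_combination (y^2+S*y+10+S^2) * hyS
  have y5 : y^5 = (S^4+30*S^2+100)*y+(10*S^3+200*S) := by
    linear_combination y * y4 + (S^3+20*S) * hyS
  have y6 : y^6 = (S^5+40*S^3+300*S)*y + (10*S^4+300*S^2+1000) := by
    linear_combination y * y5 + (S^4+30*S^2+100) * hyS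
  linear_combination y6 + 6*y5+25*y4

/-! ### Roots of the quintic -/

theorem natDegree_dvd_finrank {K E : Type*} [Field K] [Field E] [Algebra K E]
    {p : K[X]} (hp : Irreducible p) {y : E} (hy : aeval y p = 0) :
    p.natDegree ∣ Module.finrank K E := by
  have hInt : IsIntegral K y := IsAlgebraic.isIntegral ⟨p, hp.ne_zero, hy⟩
  have h1 := minpoly.eq_of_irreducible hp hy
  have h2 : (minpoly K y).natDegree = p.natDegree := by
    rw [← h1, mul_comm, natDegree_C_mul (inv_ne_zero (leadingCoeff_ne_zero.2 hp.ne_zero))]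
  rw [← h2, ← IntermediateField.adjoin.finrank hInt]
  exact ⟨_, (Module.finrank_mul_finrank K (IntermediateField.adjoin K {y}) E).symm⟩

theorem X_ne_sq (r : RatFunc ℂ) : r ^ 2 ≠ RatFunc.X := by
  intro h
  have hr : r ≠ 0 := by
    rintro rfl
    exact RatFunc.X_ne_zero (by rw [← h]; simp)
  have := congrArg RatFunc.intDegree h
  rw [sq, RatFunc.intDegree_mul hr hr, RatFunc.intDegree_X] at this
  omega

theorem natDegree_quintic : quintic.natDegree = 5 := by
  unfold quintic; compute_degree!

theorem monic_quintic : quintic.Monic := by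
  unfold quintic; monicity!

instance factSplits :
    Fact ((quintic.map (algebraMap (RatFunc ℂ) quintic.SplittingField)).Splits) :=
  ⟨SplittingField.splits _⟩

theorem quintic_map (E : Type*) [Field E] [Algebra (RatFunc ℂ) E] :
    quintic.map (algebraMap (RatFunc ℂ) E) =
      X ^ 5 - C 35 * X ^ 4 + C 240 * X ^ 3 - C (680 + algebraMap (RatFunc ℂ) E RatFunc.X) * X ^ 2
        + C 880 * X - C 432 := by
  simp only [quintic, Polynomial.map_sub, Polynomial.map_add, Polynomial.map_mul,
    Polynomial.map_pow, map_C, map_X, map_ofNat, map_add, Polynomial.map_ofNat]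

/-- Vieta's formulas for an enumeration of the roots of the quintic. -/
theorem quintic_roots (e : Fin 5 ≃ quintic.rootSet quintic.SplittingField)
    (z : Fin 5 → quintic.SplittingField) (hz : ∀ i, z i = e i) (t : quintic.SplittingField)
    (ht : t = algebraMap (RatFunc ℂ) _ RatFunc.X) :
    (z 0+z 1+z 2+z 3+z 4 = 35) ∧
    (z 0*z 1+z 0*z 2+z 0*z 3+z 0*z 4+z 1*z 2+z 1*z 3+z 1*z 4+z 2*z 3+z 2*z 4+z 3*z 4 = 240) ∧
    (z 0*z 1*z 2+z 0*z 1*z 3+z 0*z 1*z 4+z 0*z 2*z 3+z 0*z 2*z 4+z 0*z 3*z 4+z 1*z 2*z 3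
      +z 1*z 2*z 4+z 1*z 3*z 4+z 2*z 3*z 4 = 680 + t) ∧
    (z 0*z 1*z 2*z 3+z 0*z 1*z 2*z 4+z 0*z 1*z 3*z 4+z 0*z 2*z 3*z 4+z 1*z 2*z 3*z 4 = 880) ∧
    (z 0*z 1*z 2*z 3*z 4 = 432) := by
  set q := quintic.map (algebraMap (RatFunc ℂ) quintic.SplittingField) with hq
  have hspl : q.Splits := SplittingField.splits quintic
  have hdeg : q.natDegree = 5 := by rw [hq, natDegree_map, natDegree_quintic]
  have hmon : q.Monic := monic_quintic.map _
  have hinj : Function.Injective z := fun i j h => by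
    rw [hz, hz] at h; exact e.injective (Subtype.ext h)
  have hroots : q.roots = Finset.univ.val.map z := by
    symm
    apply Multiset.eq_of_le_of_card_le
    · rw [Multiset.le_iff_subset (Finset.univ.nodup.map hinj)]
      intro x hx
      obtain ⟨i, -, rfl⟩ := Multiset.mem_map.1 hx
      rw [hz]
      have h1 := (mem_rootSet.1 (e i).2).2
      rw [mem_roots hmon.ne_zero, IsRoot.def, hq, eval_map_algebraMap, h1]
    · simpa [hdeg] using card_roots' q
  have hprod := hspl.eq_prod_roots_of_monic hmon
  rw [hroots, Multiset.map_map] at hprod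
  have hprod' : q = ∏ i, (X - C (z i)) := hprod
  rw [Fin.prod_univ_five] at hprod'
  have hq' : q = X ^ 5 - C 35 * X ^ 4 + C 240 * X ^ 3 - C (680 + t) * X ^ 2 + C 880 * X
      - C 432 := by
    rw [hq, ht, quintic_map]
  have hexp : (X - C (z 0)) * (X - C (z 1)) * (X - C (z 2)) * (X - C (z 3)) * (X - C (z 4))
    = X ^ 5 - C (z 0+z 1+z 2+z 3+z 4) * X ^ 4
      + C (z 0*z 1+z 0*z 2+z 0*z 3+z 0*z 4+z 1*z 2+z 1*z 3+z 1*z 4+z 2*z 3+z 2*z 4+z 3*z 4) * X ^ 3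
      - C (z 0*z 1*z 2+z 0*z 1*z 3+z 0*z 1*z 4+z 0*z 2*z 3+z 0*z 2*z 4+z 0*z 3*z 4+z 1*z 2*z 3
      +z 1*z 2*z 4+z 1*z 3*z 4+z 2*z 3*z 4) * X ^ 2
      + C (z 0*z 1*z 2*z 3+z 0*z 1*z 2*z 4+z 0*z 1*z 3*z 4+z 0*z 2*z 3*z 4+z 1*z 2*z 3*z 4) * X
      - C (z 0*z 1*z 2*z 3*z 4) := by
    simp only [map_add, map_mul]; ring
  rw [hexp, hq'] at hprod'
  have hco : ∀ a1 a2 a3 a4 a5 : quintic.SplittingField, ∀ n,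
      (X ^ 5 - C a1 * X ^ 4 + C a2 * X ^ 3 - C a3 * X ^ 2 + C a4 * X - C a5).coeff n
      = (if n = 5 then 1 else 0) - (if n = 4 then a1 else 0) + (if n = 3 then a2 else 0)
        - (if n = 2 then a3 else 0) + (if n = 1 then a4 else 0) - (if n = 0 then a5 else 0) := by
    intro a1 a2 a3 a4 a5 n
    simp only [coeff_sub, coeff_add, coeff_C_mul, coeff_X_pow, coeff_X, coeff_C, mul_ite, mul_one,
      mul_zero, eq_comm (a := 1) (b := n)]
  have hc := fun n => congrArg (fun p => p.coeff n) hprod'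
  simp only [hco] at hc
  refine ⟨?_, ?_, ?_, ?_, ?_⟩
  · have := hc 4
    norm_num at this
    linear_combination this
  · simpa using (hc 3).symm
  · have := hc 2
    norm_num at this
    linear_combination this
  · simpa using (hc 1).symm
  · simpa using (hc 0).symm

/-! ### Generating the symmetric group on five points -/

section

open Equiv Equiv.Perm

/-- A subgroup of `S₅` of order divisible by `15` contains a `5`-cycle, so is primitive, and a
`3`-cycle, so contains `A₅` by Jordan's theorem. -/
theorem perm_eq_top (H : Subgroup (Perm (Fin 5))) (h5 : 5 ∣ Nat.card H) (h3 : 3 ∣ Nat.card H)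
    (hodd : ∃ σ ∈ H, sign σ ≠ 1) : H = ⊤ := by
  have : Fact (Nat.Prime 5) := ⟨by norm_num⟩
  have : Fact (Nat.Prime 3) := ⟨by norm_num⟩
  obtain ⟨⟨g, hg⟩, hg5⟩ := exists_prime_orderOf_dvd_card' 5 h5
  obtain ⟨⟨c, hc⟩, hc3⟩ := exists_prime_orderOf_dvd_card' 3 h3
  rw [Subgroup.orderOf_mk] at hg5 hc3
  obtain ⟨n, hn⟩ := cycleType_prime_order (σ := c) (by rw [hc3]; norm_num)
  have hsum : c.cycleType.sum ≤ 5 := by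
    rw [sum_cycleType]; simpa using Finset.card_le_univ c.support
  have h3c : c.IsThreeCycle := by
    rw [hn, hc3] at hsum
    simp at hsum
    have : n = 0 := by omega
    simp [IsThreeCycle, hn, hc3, this]
  obtain ⟨m, hm⟩ := cycleType_prime_order (σ := g) (by rw [hg5]; norm_num)
  have hsum' := sum_cycleType g
  have hgc : g.support.card ≤ 5 := by simpa using Finset.card_le_univ g.support
  have hm0 : m = 0 := by
    rw [← hsum', hm, hg5] at hgc
    simp at hgc
    omega
  subst hm0
  have hcyc : g.IsCycle := by
    rw [← card_cycleType_eq_one, hm]; simp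
  have hsupp : g.support = Finset.univ := by
    rw [← Finset.card_eq_iff_eq_univ, ← hsum', hm, hg5]; simp
  have htrans : MulAction.IsPretransitive H (Fin 5) := by
    refine ⟨fun x y => ?_⟩
    obtain ⟨i, hi⟩ := hcyc.exists_zpow_eq (x := x) (y := y)
      (by rw [← mem_support, hsupp]; simp) (by rw [← mem_support, hsupp]; simp)
    exact ⟨⟨g ^ i, H.zpow_mem hg i⟩, hi⟩
  have hprim : MulAction.IsPreprimitive H (Fin 5) :=
    MulAction.IsPreprimitive.of_prime_card (by simp; norm_num)
  have hA := alternatingGroup_le_of_isPreprimitive_of_isThreeCycle_mem hprim h3c hc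
  obtain ⟨σ, hσ, hs⟩ := hodd
  rw [eq_top_iff]
  intro τ _
  rcases Int.units_eq_one_or (sign τ) with h | h
  · exact hA (mem_alternatingGroup.2 h)
  · have : τ * σ ∈ H := hA (mem_alternatingGroup.2 (by
      rw [Equiv.Perm.sign_mul, h, (Int.units_eq_one_or _).resolve_left hs]; rfl))
    exact (H.mul_mem_cancel_right hσ).1 this

end

/-! ### The Galois group of the sextic -/

theorem vandermonde_five {L : Type*} [Field L] (z : Fin 5 → L) :
    (Matrix.vandermonde z).det = (z 0-z 1)*(z 0-z 2)*(z 0-z 3)*(z 0-z 4)*(z 1-z 2)*(z 1-z 3)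
      *(z 1-z 4)*(z 2-z 3)*(z 2-z 4)*(z 3-z 4) := by
  rw [Matrix.det_vandermonde]
  have i0 : Finset.Ioi (0 : Fin 5) = {1, 2, 3, 4} := by decide
  have i1 : Finset.Ioi (1 : Fin 5) = {2, 3, 4} := by decide
  have i2 : Finset.Ioi (2 : Fin 5) = {3, 4} := by decide
  have i3 : Finset.Ioi (3 : Fin 5) = {4} := by decide
  have i4 : Finset.Ioi (4 : Fin 5) = ∅ := by decide
  rw [Fin.prod_univ_five, i0, i1, i2, i3, i4]
  have aux : ∀ a b c d e f g h i j : L, a*(b*(c*d))*(e*(f*g))*(h*i)*j*1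
      = -a * -b * -c * -d * -e * -f * -g * -h * -i * -j := by intros; ring
  simp only [Finset.prod_empty, Finset.prod_singleton, Finset.mem_insert, Finset.mem_singleton,
    Finset.prod_insert, Fin.reduceEq, or_self, not_false_eq_true, aux, neg_sub]

theorem map_vandermonde {L : Type*} [Field L] (z : Fin 5 → L) (φ : L →+* L)
    (π : Equiv.Perm (Fin 5)) (hπ : ∀ i, φ (z i) = z (π i)) :
    φ (Matrix.vandermonde z).det = (Equiv.Perm.sign π : ℤ) * (Matrix.vandermonde z).det := by
  rw [← Matrix.det_permute π, RingHom.map_det]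
  congr 1
  ext i j
  simp [Matrix.vandermonde_apply, hπ]

/-- The sextic `Y⁴(Y² + 6Y + 25) - t` over `ℂ(t)`. -/
noncomputable def sextic : (RatFunc ℂ)[X] :=
  (X ^ 4 * (X ^ 2 + C 6 * X + C 25) : ℂ[X]).map (algebraMap ℂ (RatFunc ℂ)) - C RatFunc.X

theorem natDegree_sextic : sextic.natDegree = 6 := by
  have : sextic = X ^ 6 + C 6 * X ^ 5 + C 25 * X ^ 4 - C RatFunc.X := by
    simp only [sextic, Polynomial.map_mul, Polynomial.map_add, Polynomial.map_pow, map_X,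
      map_ofNat, Polynomial.map_ofNat]
    ring
  rw [this]; compute_degree!

/-- The Galois group of the quintic acts faithfully on five points, not only by even permutations,
and the sextic has a root in the splitting field of the quintic. -/
theorem exists_rep : ∃ ψ : quintic.Gal →* Equiv.Perm (Fin 5), Function.Injective ψ ∧
    (∃ σ, Equiv.Perm.sign (ψ σ) ≠ 1) ∧ ∃ y : quintic.SplittingField, aeval y sextic = 0 := by
  have hcard : Fintype.card (quintic.rootSet quintic.SplittingField) = 5 := by
    rw [card_rootSet_eq_natDegree irr_quintic.separable (SplittingField.splits _),
      natDegree_quintic]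
  let e : Fin 5 ≃ quintic.rootSet quintic.SplittingField :=
    (Fintype.equivFinOfCardEq hcard).symm
  set z : Fin 5 → quintic.SplittingField := fun i => e i with hz
  set t : quintic.SplittingField := algebraMap (RatFunc ℂ) _ RatFunc.X with ht
  obtain ⟨h1, h2, h3, h4, h5⟩ := quintic_roots e z (fun _ => rfl) t rfl
  have : CharZero quintic.SplittingField :=
    charZero_of_injective_algebraMap (algebraMap ℂ _).injective
  have htr : Transcendental ℂ t :=
    (transcendental_algebraMap_iff (algebraMap (RatFunc ℂ) _).injective).2 RatFunc.transcendental_X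
  have ht0 : t ≠ 0 := by intro h; rw [h] at htr; exact htr isAlgebraic_zero
  have htc : 27 * t + 50000 ≠ 0 := by
    intro h
    apply htr
    refine ⟨C 27 * X + C 50000, ?_, ?_⟩
    · intro h0
      have := congrArg (fun p => p.coeff 1) h0
      simp [coeff_C] at this
    · simpa only [map_add, map_mul, aeval_X, map_ofNat] using h
  obtain ⟨s0, hs0⟩ := IsAlgClosed.exists_pow_nat_eq (10 : ℂ) (n := 2) (by norm_num)
  have hs : (algebraMap ℂ quintic.SplittingField s0) ^ 2 = 10 := by
    rw [← map_pow, hs0, map_ofNat]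
  have hdisc := disc_sq t _ _ _ _ _ _ hs h1 h2 h3 h4 h5
  have hres := cyclic_resolvent t _ _ _ _ _ _ h1 h2 h3 h4 h5 rfl
  rw [← vandermonde_five] at hdisc hres
  set δ := (Matrix.vandermonde z).det with hδ
  obtain ⟨τ, hτ⟩ : ∃ τ, δ = 8 * t * (27 * t + 50000) * τ :=
    ⟨δ / (8 * t * (27 * t + 50000)), (mul_div_cancel₀ _ (by simp [ht0, htc])).symm⟩
  have hτ2 : τ ^ 2 = t := by
    rw [hτ] at hdisc
    apply mul_left_cancel₀ (a := 64 * t ^ 2 * (27 * t + 50000) ^ 2) (by simp [ht0, htc])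
    linear_combination hdisc
  let ψ : quintic.Gal →* Equiv.Perm (Fin 5) :=
    e.symm.permCongrHom.toMonoidHom.comp (Gal.galActionHom quintic quintic.SplittingField)
  refine ⟨ψ, ?_, ?_, ?_⟩
  · exact e.symm.permCongrHom.injective.comp (Gal.galActionHom_injective _ _)
  -- If all permutations were even, `δ`, hence `τ`, would be fixed, and `t` a square in `ℂ(t)`.
  · by_contra! hall
    have hfix : ∀ φ : quintic.SplittingField ≃ₐ[RatFunc ℂ] quintic.SplittingField, φ τ = τ := by
      intro φ
      have hπ : ∀ i, φ (z i) = z (ψ (Gal.restrict quintic quintic.SplittingField φ) i) := by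
        intro i
        have := Gal.restrict_smul (p := quintic) φ (e i)
        simp only [hz, ψ]
        simp only [MonoidHom.comp_apply]
        simp [Equiv.permCongrHom, Equiv.permCongr_apply]
        exact this.symm
      have h6 := map_vandermonde z (φ : quintic.SplittingField →+* quintic.SplittingField) _ hπ
      rw [hall, ← hδ, hτ] at h6
      have h7 : φ t = t := φ.commutes _
      simp only [RingHom.coe_coe, map_mul, map_add, map_ofNat, h7, Units.val_one, Int.cast_one,
        one_mul] at h6
      exact mul_left_cancel₀ (by simp [ht0, htc]) h6
    have : IsGalois (RatFunc ℂ) quintic.SplittingField :=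
      IsGalois.of_separable_splitting_field irr_quintic.separable
    obtain ⟨r, hr⟩ := (IsGalois.mem_range_algebraMap_iff_fixed τ).2 hfix
    apply X_ne_sq r
    apply (algebraMap (RatFunc ℂ) quintic.SplittingField).injective
    rw [map_pow, hr, hτ2]
  · rw [hτ] at hres
    obtain ⟨y, hy⟩ := exists_sextic_root t τ _ htr hτ2 hres
    refine ⟨y, ?_⟩
    rw [sextic, map_sub, aeval_C, aeval_map_algebraMap]
    simp only [map_mul, map_add, map_pow, aeval_X, map_ofNat]
    rw [hy, sub_self]

theorem nonempty_gal : Nonempty (sextic.Gal ≃* Equiv.Perm (Fin 5)) := by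
  obtain ⟨ψ, hinj, ⟨σ, hσ⟩, y, hy⟩ := exists_rep
  have hirr : Irreducible sextic := irr_P
  have : IsGalois (RatFunc ℂ) quintic.SplittingField :=
    IsGalois.of_separable_splitting_field irr_quintic.separable
  have hc6 : 6 ∣ Nat.card quintic.Gal := by
    rw [Gal.card_of_separable irr_quintic.separable]
    have := natDegree_dvd_finrank hirr hy
    rwa [natDegree_sextic] at this
  have hc5 : 5 ∣ Nat.card quintic.Gal := by
    have := Gal.prime_degree_dvd_card irr_quintic (by rw [natDegree_quintic]; norm_num)
    rwa [natDegree_quintic] at this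
  have hr : Nat.card ψ.range = Nat.card quintic.Gal :=
    (Nat.card_congr (MonoidHom.ofInjective hinj).toEquiv).symm
  have htop : ψ.range = ⊤ := perm_eq_top _ (hr ▸ hc5) (hr ▸ Dvd.dvd.trans (by norm_num) hc6)
    ⟨_, ⟨σ, rfl⟩, hσ⟩
  let E : quintic.Gal ≃* Equiv.Perm (Fin 5) :=
    MulEquiv.ofBijective ψ ⟨hinj, MonoidHom.range_eq_top.1 htop⟩
  have hspl : Fact ((sextic.map (algebraMap (RatFunc ℂ) quintic.SplittingField)).Splits) := by
    refine ⟨?_⟩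
    have h := Normal.splits (F := RatFunc ℂ) (K := quintic.SplittingField) inferInstance y
    have hm := minpoly.eq_of_irreducible hirr hy
    exact h.of_dvd (map_ne_zero (minpoly.ne_zero (IsIntegral.of_finite _ y)))
      (Polynomial.map_dvd _ ⟨_, hm.symm⟩)
  let ρ : quintic.Gal →* sextic.Gal := Gal.restrict sextic quintic.SplittingField
  have hρ : Function.Surjective ρ := Gal.restrict_surjective _ _
  let χ : Equiv.Perm (Fin 5) →* sextic.Gal := ρ.comp E.symm.toMonoidHom
  have hχ : Function.Surjective χ := hρ.comp E.symm.surjective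
  have h6 : 6 ∣ Nat.card sextic.Gal := by
    rw [Gal.card_of_separable hirr.separable]
    have hdeg : (sextic.map (algebraMap (RatFunc ℂ) sextic.SplittingField)).degree ≠ 0 := by
      rw [degree_map]
      exact (natDegree_pos_iff_degree_pos.1 (by rw [natDegree_sextic]; norm_num)).ne'
    have := natDegree_dvd_finrank hirr
      (y := rootOfSplits (SplittingField.splits sextic) hdeg) (by
        rw [← eval_map_algebraMap, eval_rootOfSplits])
    rwa [natDegree_sextic] at this
  have hker : χ.ker = ⊥ := by
    by_contra hne
    have hnt : Nontrivial χ.ker := (Subgroup.nontrivial_iff_ne_bot _).2 hne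
    have hA := Equiv.Perm.alternatingGroup_le_of_normal (N := χ.ker) (by simp) hnt
    have hi := Subgroup.index_dvd_of_le hA
    rw [alternatingGroup.index_eq_two, Subgroup.index_ker, MonoidHom.range_eq_top.2 hχ,
      Subgroup.card_top] at hi
    have := h6.trans hi
    norm_num at this
  exact ⟨(MulEquiv.ofBijective χ ⟨(MonoidHom.ker_eq_bot_iff χ).1 hker, hχ⟩).symm⟩

/-! ### The isomorphism of the symmetric group with the projective linear group -/

section

open Matrix

/-- The six elements `±i, ±j, ±k` of order four in a quaternion subgroup of `GL₂(𝔽₅)`; as a list, to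
allow evaluation. -/
def quat : List (Matrix (Fin 2) (Fin 2) (ZMod 5)) :=
  [!![2,0;0,3], !![3,0;0,2], !![0,1;4,0], !![0,4;1,0], !![0,2;2,0], !![0,3;3,0]]

set_option maxRecDepth 100000 in
/-- The displayed matrix is the conjugate of `!![a,b;c,d]` by the unipotent `!![1,k;0,1]`. If all
these conjugates send `i` into `quat`, the matrix is scalar. -/
theorem core : ∀ a b c d : ZMod 5, a * d - b * c ≠ 0 →
    (∀ k : ZMod 5, ∃ q ∈ quat, !![a+k*c,b+k*d-k*(a+k*c);c,d-k*c] * !![2,0;0,3]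
      = q * !![a+k*c,b+k*d-k*(a+k*c);c,d-k*c]) → b = 0 ∧ c = 0 ∧ a = d := by
  decide +kernel

/-- Equations for an invertible matrix `!![a,b;c,d]` to normalize `quat`. -/
def Nz (a b c d : ZMod 5) : Prop :=
  (b = 0 ∧ c = 0) ∨ (a = 0 ∧ d = 0) ∨ (c = 2*a ∧ d = 3*b) ∨ (c = 3*a ∧ d = 2*b) ∨
    (c = a ∧ d = 4*b) ∨ (c = 4*a ∧ d = b)

instance (a b c d) : Decidable (Nz a b c d) := by unfold Nz; infer_instance

set_option maxRecDepth 100000 in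
/-- Every invertible matrix is moved into the normalizer of `quat` by one of the five unipotents
`!![1,k;0,1]`. -/
theorem cover : ∀ a b c d : ZMod 5, a * d - b * c ≠ 0 →
    ∃ k : ZMod 5, Nz (a + k * c) (b + k * d) c d := by decide +kernel

/-- For invertible `M`: conjugation by `M` maps `quat` into itself. -/
def Stab (M : Matrix (Fin 2) (Fin 2) (ZMod 5)) : Prop :=
  ∀ q ∈ quat, ∃ q' ∈ quat, M * q = q' * M

instance (M) : Decidable (Stab M) := by unfold Stab; infer_instance

/-- The element `i = diag(2, 3)` of `quat`. -/
def quatI : GL (Fin 2) (ZMod 5) := ⟨!![2,0;0,3], !![3,0;0,2], by decide, by decide⟩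

set_option maxRecDepth 100000 in
theorem Nz.spec : ∀ a b c d : ZMod 5, a * d - b * c ≠ 0 → Nz a b c d →
    Stab !![a,b;c,d] := by
  decide +kernel

/-- The upper unipotent matrix with off-diagonal entry `k`. -/
def unip (k : ZMod 5) : GL (Fin 2) (ZMod 5) :=
  ⟨!![1,k;0,1], !![1,-k;0,1], by simp [Matrix.one_fin_two], by simp [Matrix.one_fin_two]⟩

/-- `quat` as a subset of `GL₂(𝔽₅)`. -/
def quatSet : Set (GL (Fin 2) (ZMod 5)) := {g | g.val ∈ quat}

theorem mem_norm {g : GL (Fin 2) (ZMod 5)} (h : Stab g.val) :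
    g ∈ Subgroup.normalizer quatSet := by
  apply Subgroup.mem_normalizer_fintype
  intro n hn
  obtain ⟨q', hq', e⟩ := h _ hn
  change (g * n * g⁻¹).val ∈ quat
  have : (g * n * g⁻¹).val = q' := by
    rw [Units.val_mul, Units.val_mul, e, mul_assoc, ← Units.val_mul]; simp
  rwa [this]

/-- The normalizer `H` of `quat` has at most five cosets by `cover`, and the kernel of the action on
`GL₂(𝔽₅) ⧸ H` is the center by `core`. Since `PGL₂(𝔽₅)` has order `480 / 4 = 120 = 5!`, the action
is an isomorphism onto `S₅`. -/
theorem nonempty_pgl : Nonempty (Equiv.Perm (Fin 5) ≃*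
    (GL (Fin 2) (ZMod 5) ⧸ Subgroup.center (GL (Fin 2) (ZMod 5)))) := by
  have h5p : Fact (Nat.Prime 5) := ⟨by norm_num⟩
  set H := Subgroup.normalizer quatSet with hH
  set φ := MulAction.toPermHom (GL (Fin 2) (ZMod 5)) (GL (Fin 2) (ZMod 5) ⧸ H) with hφ
  have hdet : ∀ g : GL (Fin 2) (ZMod 5), g.val 0 0 * g.val 1 1 - g.val 0 1 * g.val 1 0 ≠ 0 := by
    intro g
    rw [← Matrix.det_fin_two]
    exact (Matrix.isUnits_det_units g).ne_zero
  have hker : φ.ker = Subgroup.center (GL (Fin 2) (ZMod 5)) := by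
    rw [hφ, ← Subgroup.normalCore_eq_ker]
    apply le_antisymm
    · intro g hg
      have key := core _ _ _ _ (hdet g) (fun k => by
        have h1 := hg (unip k)
        have h2 := (h1 quatI).1 (by show _ ∈ quat; decide)
        refine ⟨_, h2, ?_⟩
        have e : (unip k * g * (unip k)⁻¹).val =
            !![g.val 0 0+k*g.val 1 0,
              g.val 0 1+k*g.val 1 1-k*(g.val 0 0+k*g.val 1 0);g.val 1 0,g.val 1 1-k*g.val 1 0] := by
          rw [Units.val_mul, Units.val_mul]
          change !![1,k;0,1] * g.val * !![1,-k;0,1] = _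
          rw [Matrix.eta_fin_two g.val]
          ext i j; fin_cases i <;> fin_cases j <;>
            simp [Matrix.mul_apply, Fin.sum_univ_two] <;> ring
        rw [← e, ← Units.val_mul, inv_mul_cancel_right, Units.val_mul]
        rfl)
      rw [Matrix.GeneralLinearGroup.mem_center_iff_val_mem_range_scalar]
      refine ⟨g.val 0 0, ?_⟩
      obtain ⟨k1, k2, k3⟩ := key
      ext i j; fin_cases i <;> fin_cases j <;> simp [k1, k2, k3]
    · intro g hg b
      have : b * g * b⁻¹ = g := by rw [Subgroup.mem_center_iff.1 hg b]; simp
      rw [this]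
      exact Subgroup.center_le_normalizer _ hg
  have hsurj : Function.Surjective (fun k : ZMod 5 =>
      (QuotientGroup.mk (unip k)⁻¹ : GL (Fin 2) (ZMod 5) ⧸ H)) := by
    intro x
    obtain ⟨g, rfl⟩ := QuotientGroup.mk_surjective x
    obtain ⟨k, hk⟩ := cover _ _ _ _ (hdet g)
    refine ⟨k, ?_⟩
    simp only
    rw [QuotientGroup.eq, inv_inv]
    apply mem_norm
    have e : (unip k * g).val =
        !![g.val 0 0 + k * g.val 1 0, g.val 0 1 + k * g.val 1 1; g.val 1 0, g.val 1 1] := by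
      rw [Units.val_mul]
      change !![1,k;0,1] * g.val = _
      rw [Matrix.eta_fin_two g.val]
      ext i j; fin_cases i <;> fin_cases j <;> simp [Matrix.mul_apply, Fin.sum_univ_two]
    rw [e]
    refine Nz.spec _ _ _ _ ?_ hk
    convert hdet g using 1
    ring
  have hle : Nat.card (GL (Fin 2) (ZMod 5) ⧸ H) ≤ 5 := by
    simpa using Nat.card_le_card_of_surjective _ hsurj
  have hGL : Nat.card (GL (Fin 2) (ZMod 5)) = 480 := by
    rw [Matrix.card_GL_field]; simp [Fin.prod_univ_two]
  have hcen : Nat.card (Subgroup.center (GL (Fin 2) (ZMod 5))) ≤ 4 := by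
    rw [Matrix.GeneralLinearGroup.center_eq_range_scalar]
    have := Nat.card_le_card_of_surjective _
      (Matrix.GeneralLinearGroup.scalar (R := ZMod 5) (Fin 2)).rangeRestrict_surjective
    have h4 : Nat.card (ZMod 5)ˣ = 4 := by rw [Nat.card_eq_fintype_card, ZMod.card_units]
    omega
  have hrange : 120 ≤ Nat.card φ.range := by
    have h1 := φ.ker.card_mul_index
    rw [Subgroup.index_ker, hker, hGL] at h1
    by_contra! hlt
    nlinarith
  have hP : Nat.card (Equiv.Perm (GL (Fin 2) (ZMod 5) ⧸ H))
      = (Nat.card (GL (Fin 2) (ZMod 5) ⧸ H)).factorial := by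
    rw [Nat.card_perm]
  have hle2 := Subgroup.card_le_card_group φ.range
  have h5 : Nat.card (GL (Fin 2) (ZMod 5) ⧸ H) = 5 := by
    by_contra hne
    have : (Nat.card (GL (Fin 2) (ZMod 5) ⧸ H)).factorial ≤ (4).factorial :=
      Nat.factorial_le (by omega)
    have : (4).factorial = 24 := rfl
    omega
  have hsurjφ : Function.Surjective φ := by
    rw [← MonoidHom.range_eq_top]
    apply Subgroup.eq_top_of_le_card
    rw [hP, h5]
    exact hrange
  have e1 : (GL (Fin 2) (ZMod 5) ⧸ H) ≃ Fin 5 := Finite.equivFinOfCardEq h5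
  exact ⟨((QuotientGroup.quotientMulEquivOfEq hker).symm.trans
    ((QuotientGroup.quotientKerEquivOfSurjective φ hsurjφ).trans e1.permCongrHom)).symm⟩

end

/-- The monodromy group of `p(X) = X⁴(X² + 6X + 25)` is isomorphic to `PGL₂(𝔽₅)`,
the quotient of `GL₂(𝔽₅)` by its center. -/
theorem monodromy_of_deg6_exceptional :
    Nonempty
      (monodromyGroup (X ^ 4 * (X ^ 2 + C 6 * X + C 25)) ≃*
        (Matrix.GeneralLinearGroup (Fin 2) (ZMod 5) ⧸
          Subgroup.center (Matrix.GeneralLinearGroup (Fin 2) (ZMod 5)))) := by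
  obtain ⟨e⟩ := nonempty_gal
  obtain ⟨f⟩ := nonempty_pgl
  exact ⟨e.trans f⟩
end

section
/- Let $p$ be a complex polynomial of degree $6$ such that the Galois group of $p(Y) - t$ over the field $\mathbb{C}(t)$ of rational functions is isomorphic as a group to $PGL_2(\mathbb{F}_5)$ (the quotient of $GL_2(\mathbb{F}_5)$ by its center). Then there exist polynomials $\ell_1 = aX + b$ and $\ell_2 = cX + d$ with $a, c \neq 0$ such that $p = \ell_1 \circ q \circ \ell_2$, where $q(X) = X^4(X^2 + 6X + 25)$. -/
/-!
Only the order `120` of the monodromy group `G` is used. The polynomial `p(Y) - t` is irreducible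
over `ℂ(t)`, so `G` is a transitive group on its six roots. Having an element of order `5`, it is
primitive; by Jordan's theorem it contains neither a transposition nor a `3`-cycle
(`support_card_ne`). An element of order `5` also prevents `p` from being a composition of
polynomials of degree below `5` (`no_five_of_comp`).

The group `G` contains the local monodromy at every value `v`: Hensel's lemma yields the
Puiseux expansions of the roots of `p(Y) - t` in a variable `s` with `t = v + s ^ N`
(`exists_branches`), and `s ↦ ζ * s` acts on them through an element of `G` (`local_monodromy`).
Consequently no fibre of `p` has type `(2, 1, 1, 1, 1)`, `(3, 1, 1, 1)` or `(3, 2, 1)`.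
Indecomposability excludes the types `(2, 2, 2)` and `(6)`.

The derivative of `p` has five zeros with multiplicity. As no value has ramification `1`, and none
has ramification `5`, there is one value with ramification `3` and one with ramification
`2`, and their types must be `(4, 1, 1)` and `(2, 2, 1, 1)`. After a translation,
`p = v + y ^ 4 * (α * y ^ 2 + β * y + γ)`, and the two nonzero critical points have the same value.
This forces `β = 0`, in which case `p` is a polynomial in `y ^ 2`, or `25 * β ^ 2 = 36 * α * γ`,
which is the asserted form up to scaling (`normal_form_algebra`).
-/

open Polynomial

open scoped Pointwise

/-! ### Permutation groups of order 120 on six points -/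

theorem card_PGL : Nat.card (Matrix.GeneralLinearGroup (Fin 2) (ZMod 5) ⧸
          Subgroup.center (Matrix.GeneralLinearGroup (Fin 2) (ZMod 5))) = 120 := by
  have : Fact (Nat.Prime 5) := ⟨by norm_num⟩
  have h1 := Subgroup.card_eq_card_quotient_mul_card_subgroup
    (Subgroup.center (Matrix.GeneralLinearGroup (Fin 2) (ZMod 5)))
  have h2 : Nat.card (Matrix.GeneralLinearGroup (Fin 2) (ZMod 5)) = 480 := by
    rw [Matrix.card_GL_field]
    simp [Fin.prod_univ_two]
  have h3 : Nat.card (Subgroup.center (Matrix.GeneralLinearGroup (Fin 2) (ZMod 5))) = 4 := by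
    rw [Matrix.GeneralLinearGroup.center_eq_range_scalar]
    have hinj : Function.Injective
        (Matrix.GeneralLinearGroup.scalar (Fin 2) : (ZMod 5)ˣ →* _) := by
      intro a b h
      have := congrArg (fun g : Matrix.GeneralLinearGroup (Fin 2) (ZMod 5) => g.val 0 0) h
      simpa [Units.ext_iff] using this
    rw [← Nat.card_congr (MonoidHom.ofInjective hinj).toEquiv, Nat.card_eq_fintype_card,
      ZMod.card_units]
  rw [h2, h3] at h1
  omega

/-- An element with `g ^ 5 = 1` acts on a stable set with fewer than five points trivially, since
its orbits have size `1` or `5`. -/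
theorem smul_eq_of_pow_five {G Ω : Type*} [Group G] [MulAction G Ω] {g : G} (hg : g ^ 5 = 1)
    (S : Finset Ω) (hS : S.card < 5) (hgS : ∀ x ∈ S, g • x ∈ S) {x : Ω} (hx : x ∈ S) :
    g • x = x := by
  have hper : MulAction.period g x ∣ 5 := by
    rw [← MulAction.pow_smul_eq_iff_period_dvd, hg, one_smul]
  rcases (Nat.dvd_prime (by norm_num)).1 hper with h | h
  · have := MulAction.pow_period_smul g x
    rwa [h, pow_one] at this
  · exfalso
    have hmem : ∀ k : ℕ, g ^ k • x ∈ S := by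
      intro k
      induction k with
      | zero => simpa using hx
      | succ k ih => rw [pow_succ', mul_smul]; exact hgS _ ih
    have hinj : Set.InjOn (fun k : ℕ => g ^ k • x) (Finset.range 5) := by
      intro a ha b hb hab
      simp only [Finset.coe_range, Set.mem_Iio] at ha hb
      wlog hle : a ≤ b generalizing a b
      · exact (this hab.symm hb ha (by omega)).symm
      have h0 : g ^ (b - a) • x = x := by
        have hab' : g ^ a • x = g ^ a • g ^ (b - a) • x := by
          rw [← mul_smul, ← pow_add, Nat.add_sub_cancel' hle]; exact hab
        exact (MulAction.injective _ hab').symm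
      rw [MulAction.pow_smul_eq_iff_period_dvd, h] at h0
      have := Nat.eq_zero_of_dvd_of_lt h0 (by omega)
      omega
    have := Finset.card_le_card_of_injOn (s := Finset.range 5) (t := S) _ (fun k _ => hmem k) hinj
    simp at this
    omega

/-- A transitive group of order `120` on six points is primitive: it contains an element of order
`5`, which fixes exactly one point `a`. That element stabilizes any block through `a`, and a proper
block has fewer than five points, so it is fixed pointwise and hence reduced to `a`. -/
theorem isPreprimitive_of_card {Ω : Type*} [Fintype Ω] [DecidableEq Ω]
    (hΩ : Fintype.card Ω = 6) (H : Subgroup (Equiv.Perm Ω)) (hH : Nat.card H = 120)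
    [MulAction.IsPretransitive H Ω] : MulAction.IsPreprimitive H Ω := by
  classical
  have : Fact (Nat.Prime 5) := ⟨by norm_num⟩
  obtain ⟨g, hg⟩ := exists_prime_orderOf_dvd_card' (G := H) 5 (by rw [hH]; norm_num)
  have hg5 : g ^ 5 = 1 := hg ▸ pow_orderOf_eq_one g
  have hg1 : g ≠ 1 := by rintro rfl; simp at hg
  -- a nontrivial element of order `5` fixes at most one point
  have hfix : ∀ a b : Ω, a ≠ b → g • a = a → g • b = b → False := by
    intro a b hab ha hb
    apply hg1
    ext x
    have key : ∀ x : Ω, g • x = x := by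
      intro x
      by_cases hx : x ∈ ({a, b} : Finset Ω)ᶜ
      · refine smul_eq_of_pow_five hg5 ({a, b} : Finset Ω)ᶜ ?_ ?_ hx
        · rw [Finset.card_compl, hΩ, Finset.card_pair hab]; norm_num
        · intro y hy
          simp only [Finset.mem_compl, Finset.mem_insert, Finset.mem_singleton, not_or] at hy ⊢
          refine ⟨fun h => hy.1 ?_, fun h => hy.2 ?_⟩
          · exact MulAction.injective g (h.trans ha.symm)
          · exact MulAction.injective g (h.trans hb.symm)
      · simp only [Finset.mem_compl, not_not, Finset.mem_insert, Finset.mem_singleton] at hx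
        rcases hx with rfl | rfl <;> assumption
    exact key x
  -- and it fixes at least one point
  have hfix1 : ∃ a : Ω, g • a = a := by
    have hg5' : (g : Equiv.Perm Ω) ^ 5 ^ 1 = 1 := by
      rw [pow_one, ← Subgroup.coe_pow, hg5, Subgroup.coe_one]
    obtain ⟨a, ha⟩ := Equiv.Perm.exists_fixed_point_of_prime (p := 5) (n := 1)
      (by rw [hΩ]; norm_num) hg5'
    exact ⟨a, ha⟩
  obtain ⟨a, ha⟩ := hfix1
  refine MulAction.IsPreprimitive.of_isTrivialBlock_base a ?_
  intro B haB hB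
  rw [MulAction.IsTrivialBlock, or_iff_not_imp_left]
  intro hns
  rw [Set.not_subsingleton_iff] at hns
  by_contra hne
  have hcard : B.toFinset.card < 5 := by
    have := mt (MulAction.IsBlock.eq_univ_of_card_lt hB) hne
    rw [Nat.card_eq_fintype_card, hΩ, Set.ncard_eq_toFinset_card'] at this
    omega
  have hgB : g • B = B := by
    refine hB.smul_eq_of_mem haB ?_
    rwa [ha]
  have hall : ∀ x ∈ B, g • x = x := by
    intro x hx
    refine smul_eq_of_pow_five hg5 B.toFinset hcard ?_ (by simpa using hx)
    intro y hy
    rw [Set.mem_toFinset] at hy ⊢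
    rw [← hgB]
    exact Set.smul_mem_smul_set hy
  obtain ⟨x, hx, y, hy, hxy⟩ := hns
  exact hfix x y hxy (hall x hx) (hall y hy)

/-- By Jordan's theorem a primitive group containing a transposition or a `3`-cycle contains the
alternating group, which has order `360` on six points. -/
theorem support_card_ne {Ω : Type*} [Fintype Ω] [DecidableEq Ω]
    (hΩ : Fintype.card Ω = 6) (H : Subgroup (Equiv.Perm Ω)) (hH : Nat.card H = 120)
    [MulAction.IsPretransitive H Ω] (τ : Equiv.Perm Ω) (hτ : τ ∈ H) :
    τ.support.card ≠ 2 ∧ τ.support.card ≠ 3 := by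
  have hprim := isPreprimitive_of_card hΩ H hH
  constructor
  · intro h
    have := Equiv.Perm.subgroup_eq_top_of_isPreprimitive_of_isSwap_mem hprim τ
      (Equiv.Perm.card_support_eq_two.1 h) hτ
    rw [this, Subgroup.card_top, Nat.card_perm, Nat.card_eq_fintype_card, hΩ] at hH
    norm_num [Nat.factorial] at hH
  · intro h
    have := Equiv.Perm.alternatingGroup_le_of_isPreprimitive_of_isThreeCycle_mem hprim
      (card_support_eq_three_iff.1 h) hτ
    have hdvd := Subgroup.card_dvd_of_le this
    have : Nontrivial Ω := Fintype.one_lt_card_iff_nontrivial.1 (by omega)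
    rw [nat_card_alternatingGroup, Nat.card_eq_fintype_card, hΩ, hH] at hdvd
    norm_num [Nat.factorial] at hdvd

/-! ### The generic fibre and its Galois group -/

/-- The polynomial `p(Y) - t` over `ℂ(t)`, whose Galois group is the monodromy group of `p`. -/
noncomputable abbrev genericFiber (p : ℂ[X]) : (RatFunc ℂ)[X] :=
  p.map (algebraMap ℂ (RatFunc ℂ)) - C RatFunc.X

/-- Exchanging the two variables turns `p(Y) - t`, as a polynomial over `ℂ[t]`, into a polynomial
of degree one in `t`; the lemma of Gauss then passes to `ℂ(t)`. -/
theorem irreducible_genericFiber (p : ℂ[X]) (hp : p.natDegree ≠ 0) :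
    Irreducible (genericFiber p) := by
  have h1 : Irreducible (p.map (algebraMap ℂ ℂ[X]) - C X) := by
    have : p.map (algebraMap ℂ ℂ[X]) - C X = Bivariate.swap (C p - X : ℂ[X][X]) := by
      simp [Bivariate.swap_apply, aevalAeval, aevalAevalEquiv]
      rfl
    rw [this, MulEquiv.irreducible_iff, ← neg_sub]
    exact (Associated.refl (X - C p)).neg_left.symm.irreducible (irreducible_X_sub_C p)
  have h2 : genericFiber p = (p.map (algebraMap ℂ ℂ[X]) - C X).map
      (algebraMap ℂ[X] (RatFunc ℂ)) := by
    simp [genericFiber, Polynomial.map_map]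
  rw [h2, ← IsPrimitive.irreducible_iff_irreducible_map_fraction_map]
  · exact h1
  · apply h1.isPrimitive
    intro h
    apply hp
    have : (p.map (algebraMap ℂ ℂ[X]) - C X).natDegree = p.natDegree := by
      rw [natDegree_sub_C, natDegree_map_eq_of_injective (algebraMap ℂ ℂ[X]).injective]
    omega

theorem natDegree_genericFiber (p : ℂ[X]) : (genericFiber p).natDegree = p.natDegree := by
  rw [natDegree_sub_C, natDegree_map]

theorem algEquiv_fixes_root {K E : Type*} [Field K] [Field E] [Algebra K E] (τ : E ≃ₐ[K] E)
    (hτ : τ ^ 5 = 1) (q : E[X]) (hq0 : q.natDegree ≠ 0) (hq : q.natDegree < 5)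
    (hqτ : q.map (τ : E →+* E) = q) (y : E) (hy : q.eval y = 0) : τ y = y := by
  classical
  have hne : q ≠ 0 := by rintro rfl; simp at hq0
  refine smul_eq_of_pow_five hτ q.roots.toFinset ?_ ?_ (x := y) ?_
  · exact ((Multiset.toFinset_card_le _).trans (card_roots' q)).trans_lt hq
  · intro x hx
    rw [Multiset.mem_toFinset, mem_roots hne, IsRoot.def] at hx ⊢
    have := eval_map_apply (p := q) (f := (τ : E →+* E)) (x := x)
    rw [hqτ, hx, map_zero] at this
    exact this
  · rw [Multiset.mem_toFinset, mem_roots hne]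
    exact hy

/-- If `p = h ∘ g` with both factors of degree below `5`, an automorphism of order `5` fixes `g(y)`
for every root `y` of `p(Y) - t`, because `g(y)` is a root of `h(Z) - t`; it then fixes `y`, a root
of `g(Y) - g(y)`. Hence such an automorphism would be trivial. -/
theorem no_five_of_comp (p h g : ℂ[X]) (hp : p.natDegree ≠ 0) (hcomp : p = h.comp g)
    (hh : h.natDegree < 5) (hg : g.natDegree < 5) (hcard : Nat.card (genericFiber p).Gal = 120) :
    False := by
  classical
  have : Fact (Nat.Prime 5) := ⟨by norm_num⟩
  obtain ⟨σ, hσ⟩ := exists_prime_orderOf_dvd_card' (G := (genericFiber p).Gal) 5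
    (by rw [hcard]; norm_num)
  have hσ5 : σ ^ 5 = 1 := hσ ▸ pow_orderOf_eq_one σ
  have hσ1 : σ ≠ 1 := by rintro rfl; simp at hσ
  have hg0 : g.natDegree ≠ 0 := by
    rintro h0; apply hp; rw [hcomp, natDegree_comp, h0, mul_zero]
  have hh0 : h.natDegree ≠ 0 := by
    rintro h0; apply hp; rw [hcomp, natDegree_comp, h0, zero_mul]
  apply hσ1
  apply Gal.ext
  intro y hy
  let τ : (genericFiber p).SplittingField ≃ₐ[RatFunc ℂ] (genericFiber p).SplittingField := σ
  have hτ5 : τ ^ 5 = 1 := hσ5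
  have hτ : (τ : (genericFiber p).SplittingField →+* (genericFiber p).SplittingField).comp
      (algebraMap (RatFunc ℂ) _) = algebraMap (RatFunc ℂ) _ := by
    ext x
    exact τ.commutes x
  set φ : ℂ →+* (genericFiber p).SplittingField :=
    (algebraMap (RatFunc ℂ) _).comp (algebraMap ℂ (RatFunc ℂ)) with hφ
  have hτφ : (τ : (genericFiber p).SplittingField →+* (genericFiber p).SplittingField).comp φ
      = φ := by
    rw [hφ, ← RingHom.comp_assoc, hτ]
  have hy0 : eval₂ φ y p = algebraMap (RatFunc ℂ) _ RatFunc.X := by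
    have := (mem_rootSet.1 hy).2
    rw [aeval_def, eval₂_sub, eval₂_map, eval₂_C, sub_eq_zero] at this
    exact this
  have hz : τ (eval₂ φ y g) = eval₂ φ y g := by
    refine algEquiv_fixes_root τ hτ5
      (h.map φ - C (algebraMap (RatFunc ℂ) _ RatFunc.X)) ?_ ?_ ?_ _ ?_
    · rwa [natDegree_sub_C, natDegree_map]
    · rwa [natDegree_sub_C, natDegree_map]
    · rw [Polynomial.map_sub, Polynomial.map_map, hτφ, map_C]
      congr 2
      exact τ.commutes _
    · rw [eval_sub, eval_map, eval_C, ← eval₂_comp, ← hcomp, hy0, sub_self]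
  refine algEquiv_fixes_root τ hτ5 (g.map φ - C (eval₂ φ y g)) ?_ ?_ ?_ _ ?_
  · rwa [natDegree_sub_C, natDegree_map]
  · rwa [natDegree_sub_C, natDegree_map]
  · rw [Polynomial.map_sub, Polynomial.map_map, hτφ, map_C]
    congr 2
  · rw [eval_sub, eval_map, eval_C, sub_self]

/-- If `f` has all its six roots in an extension `E` of `ℂ(t)`, then no automorphism of `E` over
`ℂ(t)` moves exactly two or exactly three of them. -/
theorem moved_roots_card_ne (f : (RatFunc ℂ)[X]) (hirr : Irreducible f) (hdeg : f.natDegree = 6)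
    (hcard : Nat.card f.Gal = 120) {E : Type*} [Field E] [DecidableEq E] (i : RatFunc ℂ →+* E)
    (φ : E ≃+* E) (hφ : ∀ x, φ (i x) = i x) (R : Finset E) (hR : R.card = 6)
    (hroot : ∀ r ∈ R, f.eval₂ i r = 0) :
    (R.filter fun r => φ r ≠ r).card ≠ 2 ∧ (R.filter fun r => φ r ≠ r).card ≠ 3 := by
  classical
  let : Algebra (RatFunc ℂ) E := i.toAlgebra
  let ψ : E ≃ₐ[RatFunc ℂ] E := AlgEquiv.ofRingEquiv (f := φ) hφ
  have hf0 : f.map (algebraMap (RatFunc ℂ) E) ≠ 0 :=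
    (Polynomial.map_ne_zero_iff (algebraMap (RatFunc ℂ) E).injective).2 hirr.ne_zero
  have hle : R.val ≤ (f.map (algebraMap (RatFunc ℂ) E)).roots := by
    rw [Finset.val_le_iff_val_subset]
    intro r hr
    rw [mem_roots hf0, IsRoot.def, eval_map]
    exact hroot r hr
  have hroots : (f.map (algebraMap (RatFunc ℂ) E)).roots = R.val := by
    symm
    apply Multiset.eq_of_le_of_card_le hle
    refine (card_roots' _).trans ?_
    rw [natDegree_map, hdeg]
    exact hR.ge
  have : Fact ((f.map (algebraMap (RatFunc ℂ) E)).Splits) := ⟨by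
    rw [splits_iff_card_roots, hroots, natDegree_map, hdeg]
    exact hR⟩
  have hmem : ∀ r, r ∈ f.rootSet E ↔ r ∈ R := by
    intro r
    rw [rootSet_def, aroots_def, hroots]
    simp
  have hΩ : Fintype.card (f.rootSet E) = 6 := by
    rw [← hR, ← Fintype.card_coe]
    exact Fintype.card_congr (Equiv.subtypeEquivRight hmem)
  have hinj := Gal.galActionHom_injective f E
  have htr : MulAction.IsPretransitive (Gal.galActionHom f E).range (f.rootSet E) := by
    have := Gal.galAction_isPretransitive f E hirr
    constructor
    intro x y
    obtain ⟨g, hg⟩ := MulAction.exists_smul_eq f.Gal x y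
    exact ⟨⟨Gal.galActionHom f E g, g, rfl⟩, hg⟩
  have hH : Nat.card (Gal.galActionHom f E).range = 120 := by
    rw [← hcard]
    exact (Nat.card_congr (MonoidHom.ofInjective hinj).toEquiv).symm
  have key := support_card_ne hΩ _ hH (Gal.galActionHom f E (Gal.restrict f E ψ)) ⟨_, rfl⟩
  have hsupp : (Gal.galActionHom f E (Gal.restrict f E ψ)).support.card =
      (R.filter fun r => φ r ≠ r).card := by
    refine Finset.card_bij (fun x _ => (x : E)) ?_ ?_ ?_
    · intro x hx
      rw [Equiv.Perm.mem_support, Ne, Subtype.ext_iff, Gal.galActionHom_restrict] at hx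
      exact Finset.mem_filter.2 ⟨(hmem _).1 x.2, hx⟩
    · intro x _ y _ h
      exact Subtype.ext h
    · intro r hr
      obtain ⟨hr, hne⟩ := Finset.mem_filter.1 hr
      refine ⟨⟨r, (hmem r).2 hr⟩, ?_, rfl⟩
      rw [Equiv.Perm.mem_support, Ne, Subtype.ext_iff, Gal.galActionHom_restrict]
      exact hne
  rwa [hsupp] at key

/-! ### Puiseux branches -/

/-- Hensel lifting of one branch at `0` of `y ^ e * U(y) = s ^ (k * e)`. Substituting
`y = s ^ k / W` and clearing denominators gives a monic equation for `W`, whose reduction modulo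
`s` is `W ^ (m + e) = U(0) * W ^ m` with `m = deg U`; a nonzero `w` with `w ^ e = U(0)` is a simple
root of it. -/
theorem exists_branch_aux (U : ℂ[X]) (e k : ℕ) (he : e ≠ 0) (hk : k ≠ 0) (w : ℂ)
    (hw0 : w ≠ 0) (hw : w ^ e = U.eval 0) :
    ∃ W : PowerSeries ℂ, PowerSeries.constantCoeff W = w ∧
      (PowerSeries.X ^ k * W⁻¹) ^ e * aeval (PowerSeries.X ^ k * W⁻¹) U =
        PowerSeries.X ^ (k * e) := by
  set m := U.natDegree with hm
  set S : (PowerSeries ℂ)[X] := ∑ j ∈ Finset.range (m + 1),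
    C (PowerSeries.C (U.coeff j) * PowerSeries.X ^ (k * j)) * X ^ (m - j) with hS
  set F : (PowerSeries ℂ)[X] := X ^ (m + e) - S with hF
  have hSdeg : S.degree < (m + e : ℕ) := by
    refine (degree_sum_le _ _).trans_lt ?_
    rw [Finset.sup_lt_iff (WithBot.bot_lt_coe _)]
    intro j _
    refine (degree_C_mul_X_pow_le _ _).trans_lt ?_
    exact_mod_cast (by omega : m - j < m + e)
  have hmonic : F.Monic := monic_X_pow_sub hSdeg
  have hmap : F.map PowerSeries.constantCoeff = X ^ (m + e) - C (U.eval 0) * X ^ m := by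
    rw [hF, hS, Polynomial.map_sub, Polynomial.map_sum, Finset.sum_range_succ',
      Finset.sum_eq_zero]
    · simp [coeff_zero_eq_eval_zero]
    · intro j _
      simp [hk]
  have hev : PowerSeries.constantCoeff (F.eval (PowerSeries.C w)) = 0 := by
    rw [← Polynomial.eval_map_apply, hmap]
    simp [← hw]
    ring
  have hder : PowerSeries.constantCoeff (F.derivative.eval (PowerSeries.C w)) ≠ 0 := by
    rw [← Polynomial.eval_map_apply, ← derivative_map, hmap]
    intro h
    have h2 : w * eval w (derivative (X ^ (m + e) - C (U.eval 0) * X ^ m)) =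
        e * w ^ (m + e) := by
      have h3 : ∀ u : ℂ, w * eval w (derivative (X ^ (m + e) - C u * X ^ m)) =
          (m + e : ℕ) * w ^ (m + e) - u * m * w ^ m := by
        intro u
        have hpow : ∀ n : ℕ, w * eval w (derivative (X ^ n : ℂ[X])) = n * w ^ n := by
          rintro (_ | n)
          · simp
          · simp only [derivative_X_pow, eval_mul, eval_C, eval_pow, eval_X, Nat.add_sub_cancel]
            ring
        rw [derivative_sub, derivative_C_mul, eval_sub, eval_mul, eval_C, mul_sub, hpow,
          mul_left_comm, hpow]
        ring
      rw [h3, ← hw]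
      push_cast
      ring
    rw [PowerSeries.constantCoeff_C] at h
    rw [h, mul_zero] at h2
    have := mul_ne_zero (Nat.cast_ne_zero (R := ℂ).2 he) (pow_ne_zero (m + e) hw0)
    exact this h2.symm
  obtain ⟨W, hW, hWw⟩ := HenselianRing.is_henselian (I := Ideal.span {PowerSeries.X}) F hmonic
    (PowerSeries.C w) (by rwa [Ideal.mem_span_singleton, PowerSeries.X_dvd_iff])
    ((PowerSeries.isUnit_iff_constantCoeff.2 hder.isUnit).map _)
  have hWc : PowerSeries.constantCoeff W = w := by
    rw [Ideal.mem_span_singleton, PowerSeries.X_dvd_iff, map_sub, sub_eq_zero] at hWw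
    simpa using hWw
  refine ⟨W, hWc, ?_⟩
  have hinv : W * W⁻¹ = 1 := PowerSeries.mul_inv_cancel W (by rwa [hWc])
  have hinv' : ∀ n, W ^ n * W⁻¹ ^ n = 1 := fun n => by rw [← mul_pow, hinv, one_pow]
  have hroot : W ^ (m + e) = ∑ j ∈ Finset.range (m + 1),
      PowerSeries.C (U.coeff j) * PowerSeries.X ^ (k * j) * W ^ (m - j) := by
    have := hW
    rw [IsRoot.def, hF, hS, eval_sub, eval_finsetSum, sub_eq_zero] at this
    simpa using this
  have haev : aeval (PowerSeries.X ^ k * W⁻¹) U = W⁻¹ ^ m * W ^ (m + e) := by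
    rw [hroot, aeval_eq_sum_range, Finset.mul_sum]
    refine Finset.sum_congr rfl fun j hj => ?_
    have hj' : j ≤ m := by simpa [Nat.lt_succ_iff] using hj
    obtain ⟨l, hl⟩ := Nat.exists_eq_add_of_le hj'
    rw [hl, Nat.add_sub_cancel_left, PowerSeries.smul_eq_C_mul, mul_pow, ← pow_mul, pow_add]
    linear_combination (-(PowerSeries.C (U.coeff j) * PowerSeries.X ^ (k * j) * W⁻¹ ^ j)) * hinv' l
  rw [haev, mul_pow, ← pow_mul, pow_add]
  linear_combination (PowerSeries.X ^ (k * e)) * hinv' e * (W ^ m * W⁻¹ ^ m) +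
    (PowerSeries.X ^ (k * e)) * hinv' m

/-- Branches of `P(y) = s ^ (k * e)` at a root `x` of `P` of multiplicity `e`: for some `c ≠ 0`,
each `e`-th root `w` of `c` gives a power series solution `y = x + w⁻¹ * s ^ k + ⋯`. -/
theorem exists_branch (P : ℂ[X]) (hP : P ≠ 0) (x : ℂ) (k : ℕ) (hk : k ≠ 0) :
    ∃ c : ℂ, c ≠ 0 ∧ ∀ w : ℂ, P.rootMultiplicity x ≠ 0 → w ^ P.rootMultiplicity x = c →
      ∃ r : PowerSeries ℂ, aeval r P = PowerSeries.X ^ (k * P.rootMultiplicity x) ∧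
        PowerSeries.constantCoeff r = x ∧ PowerSeries.coeff k r = w⁻¹ := by
  obtain ⟨Q, hQ, hnd⟩ := exists_eq_pow_rootMultiplicity_mul_and_not_dvd P hP x
  refine ⟨Q.eval x, fun h => hnd (dvd_iff_isRoot.2 h), ?_⟩
  intro w he hw
  have hw0 : w ≠ 0 := by
    rintro rfl
    rw [zero_pow he] at hw
    exact hnd (dvd_iff_isRoot.2 hw.symm)
  obtain ⟨W, hWc, hW⟩ := exists_branch_aux (Q.comp (X + C x)) _ k he hk w hw0
    (by simpa using hw)
  refine ⟨PowerSeries.C x + PowerSeries.X ^ k * W⁻¹, ?_, ?_, ?_⟩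
  · rw [← hW]
    conv_lhs => rw [hQ]
    simp [aeval_comp, add_comm]
  · simp [hk]
  · simp [PowerSeries.coeff_C, hk, PowerSeries.coeff_X_pow_mul', hWc]

/-- If all multiplicities of roots of `P` divide `N`, then `P(y) = s ^ N` has `deg P` distinct
solutions in `ℂ⟦s⟧`. The substitution `s ↦ ζ * s`, with `ζ ^ N = 1`, permutes them, and it moves
exactly the branches centred at roots whose multiplicity `e` satisfies `ζ ^ (N / e) ≠ 1`. `R` is
the set of all solutions and `R'` the subset of moved ones. -/
theorem exists_branches (P : ℂ[X]) (hP : P ≠ 0) (N : ℕ) (hN : N ≠ 0)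
    (hdvd : ∀ x ∈ P.roots, P.rootMultiplicity x ∣ N) (ζ : ℂ) (hζ : ζ ^ N = 1) :
    ∃ R : Finset (PowerSeries ℂ), R.card = P.natDegree ∧
      (∀ r ∈ R, aeval r P = PowerSeries.X ^ N) ∧
      ∃ R' : Finset (PowerSeries ℂ), (∀ r, r ∈ R' ↔ r ∈ R ∧ PowerSeries.rescale ζ r ≠ r) ∧
      R'.card = ∑ x ∈ P.roots.toFinset with ζ ^ (N / P.rootMultiplicity x) ≠ 1,
        P.rootMultiplicity x := by
  classical
  have hmul : ∀ x ∈ P.roots.toFinset, P.rootMultiplicity x ≠ 0 := by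
    intro x hx
    rw [← count_roots]
    exact Multiset.count_ne_zero.2 (Multiset.mem_toFinset.1 hx)
  have hdiv : ∀ x ∈ P.roots.toFinset, N / P.rootMultiplicity x * P.rootMultiplicity x = N :=
    fun x hx => Nat.div_mul_cancel (hdvd x (Multiset.mem_toFinset.1 hx))
  have hk : ∀ x ∈ P.roots.toFinset, N / P.rootMultiplicity x ≠ 0 := by
    intro x hx h
    have := hdiv x hx
    rw [h, zero_mul] at this
    exact hN this.symm
  choose! c hc0 hc using fun x (hx : x ∈ P.roots.toFinset) => exists_branch P hP x _ (hk x hx)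
  choose! r hr using hc
  set T : Finset (Σ _ : ℂ, ℂ) := P.roots.toFinset.sigma fun x =>
    (nthRoots (P.rootMultiplicity x) (c x)).toFinset with hT
  have hcardx : ∀ x ∈ P.roots.toFinset,
      (nthRoots (P.rootMultiplicity x) (c x)).toFinset.card = P.rootMultiplicity x := by
    intro x hx
    have hprim := Complex.isPrimitiveRoot_exp _ (hmul x hx)
    rw [Multiset.toFinset_card_of_nodup (hprim.nthRoots_nodup (hc0 x hx)), hprim.card_nthRoots,
      if_pos]
    exact IsAlgClosed.exists_pow_nat_eq _ (Nat.pos_of_ne_zero (hmul x hx))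
  have hTmem : ∀ a : Σ _ : ℂ, ℂ, a ∈ T → a.1 ∈ P.roots.toFinset ∧ a.2 ≠ 0 ∧
      aeval (r a.1 a.2) P = PowerSeries.X ^ N ∧ PowerSeries.constantCoeff (r a.1 a.2) = a.1 ∧
      PowerSeries.coeff (N / P.rootMultiplicity a.1) (r a.1 a.2) = a.2⁻¹ := by
    rintro ⟨x, w⟩ ha
    rw [hT, Finset.mem_sigma, Multiset.mem_toFinset (a := w)] at ha
    obtain ⟨hx, hw⟩ := ha
    dsimp only at hx hw ⊢
    rw [mem_nthRoots (Nat.pos_of_ne_zero (hmul x hx))] at hw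
    have := hr x hx w (hmul x hx) hw
    rw [hdiv x hx] at this
    refine ⟨hx, ?_, this⟩
    rintro rfl
    rw [zero_pow (hmul x hx)] at hw
    exact hc0 x hx hw.symm
  have hinj : Set.InjOn (fun a : Σ _ : ℂ, ℂ => r a.1 a.2) T := by
    intro a ha b hb hab
    obtain ⟨-, -, -, ha1, ha2⟩ := hTmem a ha
    obtain ⟨-, -, -, hb1, hb2⟩ := hTmem b hb
    dsimp only at hab
    obtain ⟨x, w⟩ := a
    obtain ⟨x', w'⟩ := b
    dsimp only at *
    have hxx : x = x' := by rw [← ha1, ← hb1, hab]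
    subst hxx
    rw [hab, hb2] at ha2
    rw [inv_injective ha2]
  set R := T.image fun a : Σ _ : ℂ, ℂ => r a.1 a.2 with hR
  have hRcard : R.card = P.natDegree := by
    rw [hR, Finset.card_image_of_injOn hinj, hT, Finset.card_sigma, Finset.sum_congr rfl hcardx,
      ← splits_iff_card_roots.1 (IsAlgClosed.splits P), ← Multiset.toFinset_sum_count_eq]
    simp
  have hRroot : ∀ s ∈ R, aeval s P = PowerSeries.X ^ N := by
    intro s hs
    obtain ⟨a, ha, rfl⟩ := Finset.mem_image.1 hs
    exact (hTmem a ha).2.2.1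
  -- a degree count shows that `R` contains every root
  have hRall : ∀ s, aeval s P = PowerSeries.X ^ N → s ∈ R := by
    intro s hs
    by_contra hsR
    rcases Nat.eq_zero_or_pos P.natDegree with h0 | hpos
    · rw [eq_C_of_natDegree_eq_zero h0, aeval_C] at hs
      have := congrArg PowerSeries.constantCoeff hs
      simp [hN] at this
      exact hP (by rw [eq_C_of_natDegree_eq_zero h0, this, C_0])
    set F := P.map (algebraMap ℂ (PowerSeries ℂ)) - C (PowerSeries.X ^ N)
    have hFdeg : F.natDegree = P.natDegree := by
      rw [natDegree_sub_C, natDegree_map_eq_of_injective (algebraMap ℂ (PowerSeries ℂ)).injective]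
    have hF0 : F ≠ 0 := by
      intro h
      rw [h, natDegree_zero] at hFdeg
      omega
    have hle : (insert s R).card ≤ F.natDegree := by
      refine le_trans ?_ (card_roots' F)
      refine Multiset.card_le_card (s := (insert s R).val) ?_
      rw [Finset.val_le_iff_val_subset]
      intro u hu
      rw [mem_roots hF0, IsRoot.def, eval_sub, eval_C, eval_map_algebraMap, sub_eq_zero]
      rcases Finset.mem_insert.1 hu with rfl | hu
      · exact hs
      · exact hRroot u hu
    rw [Finset.card_insert_of_notMem hsR, hFdeg, hRcard] at hle
    omega
  refine ⟨R, hRcard, hRroot, ?_⟩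
  refine ⟨(T.filter fun a => ζ ^ (N / P.rootMultiplicity a.1) ≠ 1).image fun a => r a.1 a.2,
    ?_, ?_⟩
  · intro s
    rw [Finset.mem_image]
    constructor
    · rintro ⟨a, ha, rfl⟩
      rw [Finset.mem_filter] at ha
      refine ⟨Finset.mem_image_of_mem _ ha.1, fun h => ha.2 ?_⟩
      obtain ⟨-, h0, -, -, h2⟩ := hTmem a ha.1
      have := congrArg (PowerSeries.coeff (N / P.rootMultiplicity a.1)) h
      rw [PowerSeries.coeff_rescale, h2] at this
      exact mul_eq_right₀ (inv_ne_zero h0) |>.1 this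
    · rintro ⟨hs, hne⟩
      obtain ⟨a, ha, rfl⟩ := Finset.mem_image.1 hs
      refine ⟨a, Finset.mem_filter.2 ⟨ha, fun h1 => hne ?_⟩, rfl⟩
      obtain ⟨-, h0, hroot, h1', h2⟩ := hTmem a ha
      have hmem : PowerSeries.rescale ζ (r a.1 a.2) ∈ R := by
        apply hRall
        have hcomm : (PowerSeries.rescale ζ).comp (algebraMap ℂ (PowerSeries ℂ)) =
            algebraMap ℂ (PowerSeries ℂ) := by
          ext z n
          by_cases hn : n = 0 <;> simp [PowerSeries.coeff_rescale, PowerSeries.coeff_C, hn]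
        have := congrArg (PowerSeries.rescale ζ) hroot
        rw [aeval_def, hom_eval₂, hcomm, map_pow, PowerSeries.rescale_X, mul_pow, ← map_pow, hζ,
          map_one, one_mul] at this
        exact this
      obtain ⟨b, hb, hbe⟩ := Finset.mem_image.1 hmem
      obtain ⟨-, -, -, hb1, hb2⟩ := hTmem b hb
      rw [← hbe]
      obtain ⟨x, w⟩ := a
      obtain ⟨x', w'⟩ := b
      dsimp only at *
      have hxx : x' = x := by
        rw [← hb1, hbe, ← PowerSeries.coeff_zero_eq_constantCoeff_apply, PowerSeries.coeff_rescale,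
          pow_zero, one_mul, PowerSeries.coeff_zero_eq_constantCoeff_apply, h1']
      subst hxx
      rw [hbe, PowerSeries.coeff_rescale, h1, one_mul, h2] at hb2
      rw [inv_injective hb2]
  · rw [Finset.card_image_of_injOn (hinj.mono (Finset.coe_subset.2 (Finset.filter_subset _ _))),
      Finset.card_filter, hT,
      Finset.sum_sigma, Finset.sum_filter]
    refine Finset.sum_congr rfl fun x hx => ?_
    dsimp only
    by_cases h : ζ ^ (N / P.rootMultiplicity x) = 1 <;> simp [h, hcardx x hx]

/-! ### Local monodromy -/

/-- The local monodromy of `p` around the value `v`. With `t = v + s ^ N`, the six roots of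
`p(Y) - t` lie in the fraction field of `ℂ⟦s⟧`, and `s ↦ ζ * s` induces an automorphism of that
field over `ℂ(t)`. It cannot move exactly two or exactly three roots. -/
theorem local_monodromy (p : ℂ[X]) (hdeg : p.natDegree = 6)
    (hcard : Nat.card (genericFiber p).Gal = 120) (v : ℂ) (N : ℕ) (hN : N ≠ 0)
    (hdvd : ∀ x ∈ (p - C v).roots, (p - C v).rootMultiplicity x ∣ N) (ζ : ℂ) (hζ : ζ ^ N = 1) :
    (∑ x ∈ (p - C v).roots.toFinset with ζ ^ (N / (p - C v).rootMultiplicity x) ≠ 1,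
        (p - C v).rootMultiplicity x) ≠ 2 ∧
    (∑ x ∈ (p - C v).roots.toFinset with ζ ^ (N / (p - C v).rootMultiplicity x) ≠ 1,
        (p - C v).rootMultiplicity x) ≠ 3 := by
  classical
  have hPdeg : (p - C v).natDegree = 6 := by rw [natDegree_sub_C, hdeg]
  have hP0 : p - C v ≠ 0 := by rintro h; rw [h] at hPdeg; simp at hPdeg
  obtain ⟨R, hRcard, hRroot, R', hR', hR'card⟩ := exists_branches (p - C v) hP0 N hN hdvd ζ hζ
  rw [← hR'card]
  have hζ0 : ζ ≠ 0 := by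
    rintro rfl
    rw [zero_pow hN] at hζ
    exact zero_ne_one hζ
  let E := FractionRing (PowerSeries ℂ)
  have hinj : Function.Injective (algebraMap (PowerSeries ℂ) E) := IsFractionRing.injective _ _
  -- `t ↦ v + s ^ N`
  let j : ℂ[X] →+* PowerSeries ℂ :=
    (aeval (PowerSeries.C v + PowerSeries.X ^ N) : ℂ[X] →ₐ[ℂ] PowerSeries ℂ).toRingHom
  have hj : ∀ q : ℂ[X], j q = ((q.comp (C v + X ^ N) : ℂ[X]) : PowerSeries ℂ) := by
    intro q
    have : j = (coeToPowerSeries.ringHom (R := ℂ)).comp (compRingHom (C v + X ^ N)) := by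
      apply Polynomial.ringHom_ext
      · intro a
        change aeval _ (C a) = _
        simp
      · change aeval _ X = _
        simp
    exact RingHom.congr_fun this q
  have hjinj : Function.Injective j := by
    rw [injective_iff_map_eq_zero]
    intro q hq
    rw [hj, Polynomial.coe_eq_zero_iff, comp_eq_zero_iff] at hq
    rcases hq with h | ⟨-, h⟩
    · exact h
    · exfalso
      have := congrArg (fun f : ℂ[X] => f.coeff N) h
      rw [coeff_add, coeff_X_pow_self, coeff_C_of_ne_zero hN, coeff_C_of_ne_zero hN] at this
      simp at this
  let i : RatFunc ℂ →+* E := IsFractionRing.lift (A := ℂ[X])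
    (g := (algebraMap (PowerSeries ℂ) E).comp j) (hinj.comp hjinj)
  have hi : ∀ q : ℂ[X], i (algebraMap ℂ[X] (RatFunc ℂ) q) = algebraMap (PowerSeries ℂ) E (j q) :=
    fun q => IsFractionRing.lift_algebraMap _ q
  let ρ : PowerSeries ℂ ≃+* PowerSeries ℂ := RingEquiv.ofRingHom (PowerSeries.rescale ζ)
    (PowerSeries.rescale ζ⁻¹)
    (by rw [← PowerSeries.rescale_mul, inv_mul_cancel₀ hζ0, PowerSeries.rescale_one])
    (by rw [← PowerSeries.rescale_mul, mul_inv_cancel₀ hζ0, PowerSeries.rescale_one])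
  have hρC : ∀ z : ℂ, PowerSeries.rescale ζ (PowerSeries.C z) = PowerSeries.C z := by
    intro z
    ext n
    by_cases hn : n = 0 <;> simp [PowerSeries.coeff_rescale, PowerSeries.coeff_C, hn]
  have hρj : ∀ q, ρ (j q) = j q := by
    intro q
    change (PowerSeries.rescale ζ) (aeval _ q) = aeval _ q
    have hcomm : (PowerSeries.rescale ζ).comp (algebraMap ℂ (PowerSeries ℂ)) =
        algebraMap ℂ (PowerSeries ℂ) := RingHom.ext hρC
    rw [aeval_def, hom_eval₂, hcomm, map_add, hρC, map_pow, PowerSeries.rescale_X, mul_pow,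
      ← map_pow, hζ, map_one, one_mul]
  let φ : E ≃+* E := IsFractionRing.ringEquivOfRingEquiv ρ
  have hφ : ∀ s, φ (algebraMap (PowerSeries ℂ) E s) = algebraMap (PowerSeries ℂ) E (ρ s) :=
    fun s => IsFractionRing.ringEquivOfRingEquiv_algebraMap ρ s
  have hφi : (φ : E →+* E).comp i = i := by
    apply IsLocalization.ringHom_ext (nonZeroDivisors ℂ[X])
    refine RingHom.ext fun q => ?_
    change φ (i (algebraMap ℂ[X] (RatFunc ℂ) q)) = i (algebraMap ℂ[X] (RatFunc ℂ) q)
    rw [hi, hφ, hρj]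
  have key := moved_roots_card_ne (genericFiber p) (irreducible_genericFiber p (by omega))
    (by rw [natDegree_genericFiber, hdeg]) hcard i φ (fun x => RingHom.congr_fun hφi x)
    (R.image (algebraMap (PowerSeries ℂ) E))
    (by rw [Finset.card_image_of_injective _ hinj, hRcard, hPdeg]) ?_
  · have hfilter : ((R.image (algebraMap (PowerSeries ℂ) E)).filter fun r => φ r ≠ r).card =
        R'.card := by
      rw [← Finset.card_image_of_injective R' hinj]
      congr 1
      ext z
      simp only [Finset.mem_filter, Finset.mem_image, hR']
      constructor
      · rintro ⟨⟨s, hs, rfl⟩, hne⟩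
        refine ⟨s, ⟨hs, fun h => hne ?_⟩, rfl⟩
        rw [hφ]
        exact congrArg _ h
      · rintro ⟨s, ⟨hs, hne⟩, rfl⟩
        refine ⟨⟨s, hs, rfl⟩, fun h => hne ?_⟩
        rw [hφ] at h
        exact hinj h
    rwa [hfilter] at key
  · intro z hz
    obtain ⟨s, hs, rfl⟩ := Finset.mem_image.1 hz
    have h1 := hRroot s hs
    rw [map_sub, aeval_C, sub_eq_iff_eq_add] at h1
    have hC : i.comp (algebraMap ℂ (RatFunc ℂ)) =
        (algebraMap (PowerSeries ℂ) E).comp (algebraMap ℂ (PowerSeries ℂ)) := by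
      ext z
      rw [RingHom.comp_apply, IsScalarTower.algebraMap_apply ℂ ℂ[X] (RatFunc ℂ), hi]
      change algebraMap _ _ (aeval _ (C z)) = _
      rw [aeval_C]; rfl
    have hX : i RatFunc.X = algebraMap (PowerSeries ℂ) E (PowerSeries.C v + PowerSeries.X ^ N) := by
      rw [← RatFunc.algebraMap_X, hi]
      change algebraMap _ _ (aeval _ X) = _
      rw [aeval_X]
    rw [eval₂_sub, eval₂_map, eval₂_C, hC, ← hom_eval₂, ← aeval_def, h1, hX, sub_eq_zero, add_comm]
    rfl

/-! ### Ramification types -/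

/-- A fibre of type `(2, 1, 1, 1, 1)` would give a transposition. -/
theorem no_double_fiber (p : ℂ[X]) (hdeg : p.natDegree = 6)
    (hcard : Nat.card (genericFiber p).Gal = 120) (v x : ℂ)
    (hx : (p - C v).rootMultiplicity x = 2)
    (hy : ∀ y, y ≠ x → (p - C v).rootMultiplicity y ≤ 1) : False := by
  classical
  have hpos : ∀ y ∈ (p - C v).roots, 0 < (p - C v).rootMultiplicity y := by
    intro y h
    rw [← count_roots]
    exact Multiset.count_pos.2 h
  have hxmem : x ∈ (p - C v).roots := by
    rw [← Multiset.count_pos, count_roots, hx]; norm_num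
  refine (local_monodromy p hdeg hcard v 2 two_ne_zero ?_ (-1) (by norm_num)).1 ?_
  · intro y h
    by_cases hyx : y = x
    · rw [hyx, hx]
    · have := hy y hyx
      have := hpos y h
      rw [show (p - C v).rootMultiplicity y = 1 by omega]
      norm_num
  · rw [show ((p - C v).roots.toFinset.filter
      fun y => (-1 : ℂ) ^ (2 / (p - C v).rootMultiplicity y) ≠ 1) = {x} from ?_,
      Finset.sum_singleton, hx]
    ext y
    rw [Finset.mem_filter, Finset.mem_singleton, Multiset.mem_toFinset]
    constructor
    · rintro ⟨h, hne⟩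
      by_contra hyx
      have := hy y hyx
      have := hpos y h
      rw [show (p - C v).rootMultiplicity y = 1 by omega] at hne
      norm_num at hne
    · rintro rfl
      refine ⟨hxmem, ?_⟩
      rw [hx]
      norm_num

/-- A fibre of type `(3, 1, 1, 1)` or `(3, 2, 1)` would give a `3`-cycle, in the second case as the
square of the local monodromy; `N = 6` and a primitive cube root of unity cover both. -/
theorem no_triple_fiber (p : ℂ[X]) (hdeg : p.natDegree = 6)
    (hcard : Nat.card (genericFiber p).Gal = 120) (v x : ℂ)
    (hx : (p - C v).rootMultiplicity x = 3)
    (hy : ∀ y, y ≠ x → (p - C v).rootMultiplicity y ≤ 2) : False := by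
  classical
  have hpos : ∀ y ∈ (p - C v).roots, 0 < (p - C v).rootMultiplicity y := by
    intro y h
    rw [← count_roots]
    exact Multiset.count_pos.2 h
  have hxmem : x ∈ (p - C v).roots := by
    rw [← Multiset.count_pos, count_roots, hx]; norm_num
  obtain ⟨ζ, hζ⟩ : ∃ ζ : ℂ, IsPrimitiveRoot ζ 3 :=
    ⟨_, Complex.isPrimitiveRoot_exp 3 (by norm_num)⟩
  have hζ3 := hζ.pow_eq_one
  have hζ6 : ζ ^ 6 = 1 := by rw [show 6 = 3 * 2 from rfl, pow_mul, hζ3, one_pow]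
  refine (local_monodromy p hdeg hcard v 6 (by norm_num) ?_ ζ hζ6).2 ?_
  · intro y h
    by_cases hyx : y = x
    · rw [hyx, hx]; norm_num
    · have h1 := hy y hyx
      have h2 := hpos y h
      interval_cases (p - C v).rootMultiplicity y <;> norm_num
  · rw [show ((p - C v).roots.toFinset.filter
      fun y => ζ ^ (6 / (p - C v).rootMultiplicity y) ≠ 1) = {x} from ?_,
      Finset.sum_singleton, hx]
    ext y
    rw [Finset.mem_filter, Finset.mem_singleton, Multiset.mem_toFinset]
    constructor
    · rintro ⟨h, hne⟩
      by_contra hyx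
      have h1 := hy y hyx
      have h2 := hpos y h
      interval_cases (p - C v).rootMultiplicity y
      · exact hne hζ6
      · exact hne hζ3
    · rintro rfl
      refine ⟨hxmem, ?_⟩
      rw [hx]
      exact hζ.pow_ne_one_of_pos_of_lt (by norm_num) (by norm_num)

theorem counts_of_card_five {α : Type*} [DecidableEq α] (M : Multiset α) (hM : M.card = 5)
    (h1 : ∀ v, M.count v ≠ 1) :
    (∃ v, M.count v = 5) ∨ ∃ v w, v ≠ w ∧ M.count v = 3 ∧ M.count w = 2 := by
  have hsum := Multiset.toFinset_sum_count_eq M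
  have hge : ∀ v ∈ M.toFinset, 2 ≤ M.count v := by
    intro v hv
    have := h1 v
    have := Multiset.count_pos.2 (Multiset.mem_toFinset.1 hv)
    omega
  have hcard := Finset.card_nsmul_le_sum M.toFinset _ 2 hge
  rw [hsum, hM, smul_eq_mul] at hcard
  have h3 : M.toFinset.card < 3 := by omega
  interval_cases h : M.toFinset.card
  · rw [Finset.card_eq_zero] at h
    rw [h] at hsum
    simp [hM] at hsum
  · obtain ⟨v, hv⟩ := Finset.card_eq_one.1 h
    rw [hv, Finset.sum_singleton] at hsum
    exact Or.inl ⟨v, by omega⟩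
  · obtain ⟨v, w, hvw, hv⟩ := Finset.card_eq_two.1 h
    have hv2 := hge v (by simp [hv])
    have hw2 := hge w (by simp [hv])
    rw [hv, Finset.sum_pair hvw] at hsum
    right
    by_cases h3 : M.count v = 3
    · exact ⟨v, w, hvw, h3, by omega⟩
    · exact ⟨w, v, hvw.symm, by omega, by omega⟩

/-- The multiset of critical points of `p` with value `v`: a root of `p - v` of multiplicity `e`
occurs `e - 1` times. -/
noncomputable def criticalPoints (p : ℂ[X]) (v : ℂ) : Multiset ℂ :=
  (derivative p).roots.filter fun x => eval x p = v

/-- With truncated subtraction the formula also holds at points outside the fibre over `v`. -/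
theorem count_criticalPoints (p : ℂ[X]) (v x : ℂ) :
    (criticalPoints p v).count x = (p - C v).rootMultiplicity x - 1 := by
  have hroot : (p - C v).IsRoot x ↔ eval x p = v := by
    rw [IsRoot.def, eval_sub, eval_C, sub_eq_zero]
  rw [criticalPoints, Multiset.count_filter]
  by_cases hx : eval x p = v
  · rw [if_pos hx, count_roots, ← derivative_rootMultiplicity_of_root (hroot.2 hx)]
    simp
  · rw [if_neg hx, rootMultiplicity_eq_zero (fun h => hx (hroot.1 h))]

theorem card_criticalPoints_ne_one (p : ℂ[X]) (hdeg : p.natDegree = 6)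
    (hcard : Nat.card (genericFiber p).Gal = 120) (v : ℂ) : (criticalPoints p v).card ≠ 1 := by
  classical
  intro h
  obtain ⟨x, hx⟩ := Multiset.card_eq_one.1 h
  have hcount := count_criticalPoints p v
  rw [hx] at hcount
  refine no_double_fiber p hdeg hcard v x ?_ fun y hy => ?_
  · have := hcount x
    rw [Multiset.count_singleton_self] at this
    omega
  · have := hcount y
    rw [Multiset.count_singleton, if_neg hy] at this
    omega

/-- A fibre with ramification `2` has type `(2, 2, 1, 1)`, since `(3, 1, 1, 1)` is excluded. -/
theorem exists_of_card_criticalPoints_eq_two (p : ℂ[X]) (hdeg : p.natDegree = 6)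
    (hcard : Nat.card (genericFiber p).Gal = 120) (v : ℂ) (h : (criticalPoints p v).card = 2) :
    ∃ x ∈ criticalPoints p v, ∃ y ∈ criticalPoints p v, x ≠ y := by
  classical
  obtain ⟨x, y, hxy⟩ := Multiset.card_eq_two.1 h
  refine ⟨x, by simp [hxy], y, by simp [hxy], ?_⟩
  rintro rfl
  have hcount := count_criticalPoints p v
  rw [hxy] at hcount
  refine no_triple_fiber p hdeg hcard v x ?_ fun y hy => ?_
  · have := hcount x
    simp at this
    omega
  · have := hcount y
    simp [hy] at this
    omega

/-- A fibre with ramification `3` has type `(4, 1, 1)`, `(3, 2, 1)` or `(2, 2, 2)`; the second is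
excluded by `no_triple_fiber`, the third makes `p` a quadratic polynomial in a cubic one. -/
theorem exists_of_card_criticalPoints_eq_three (p : ℂ[X]) (hdeg : p.natDegree = 6)
    (hcard : Nat.card (genericFiber p).Gal = 120) (v : ℂ) (h : (criticalPoints p v).card = 3) :
    ∃ x, (p - C v).rootMultiplicity x = 4 := by
  classical
  have hcount := count_criticalPoints p v
  have hle : ∀ x, (criticalPoints p v).count x ≤ 3 := fun x => h ▸ Multiset.count_le_card _ _
  by_contra! hne
  -- no critical point over `v` is counted twice, by `no_triple_fiber`
  have hnodup : (criticalPoints p v).Nodup := by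
    rw [Multiset.nodup_iff_count_le_one]
    intro x
    by_contra hx
    have h2 : (criticalPoints p v).count x = 2 := by
      have := hle x
      have := hne x
      have := hcount x
      omega
    refine no_triple_fiber p hdeg hcard v x (by have := hcount x; omega) fun y hy => ?_
    have hs : ∑ z ∈ ({x, y} : Finset ℂ), (criticalPoints p v).count z ≤ 3 := by
      rw [← h, ← Multiset.sum_count_eq_card
        (s := insert y (insert x (criticalPoints p v).toFinset))]
      · apply Finset.sum_le_sum_of_subset
        intro z hz
        simp only [Finset.mem_insert, Finset.mem_singleton] at hz ⊢
        tauto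
      · intro z hz
        simp [hz]
    rw [Finset.sum_pair hy.symm] at hs
    have := hcount y
    omega
  -- hence every root of `p - v` is double, so that `p - v` is a square up to a constant
  have hroots : (p - C v).roots = criticalPoints p v + criticalPoints p v := by
    symm
    apply Multiset.eq_of_le_of_card_le
    · rw [Multiset.le_iff_count]
      intro x
      rw [Multiset.count_add, count_roots]
      have := Multiset.nodup_iff_count_le_one.1 hnodup x
      have := hcount x
      omega
    · rw [Multiset.card_add, h]
      exact (card_roots' _).trans (by rw [natDegree_sub_C, hdeg])
  have hprod := (IsAlgClosed.splits (p - C v)).eq_prod_roots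
  rw [hroots, Multiset.map_add, Multiset.prod_add] at hprod
  set g : ℂ[X] := ((criticalPoints p v).map fun x => X - C x).prod
  refine no_five_of_comp p (C (p - C v).leadingCoeff * X ^ 2 + C v) g (by omega) ?_ ?_ ?_ hcard
  · simp only [add_comp, mul_comp, C_comp, pow_comp, X_comp]
    linear_combination hprod
  · refine lt_of_le_of_lt (b := 2) ?_ (by norm_num)
    compute_degree
  · rw [natDegree_multiset_prod_X_sub_C_eq_card, h]
    norm_num

/-- Ramification `5` over `v` means `p - v = A * (X - a) ^ 6`, which is decomposable. -/
theorem card_criticalPoints_ne_five (p : ℂ[X]) (hdeg : p.natDegree = 6)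
    (hcard : Nat.card (genericFiber p).Gal = 120) (v : ℂ) : (criticalPoints p v).card ≠ 5 := by
  classical
  intro h
  have hcount := count_criticalPoints p v
  have hPdeg : (p - C v).natDegree = 6 := by rw [natDegree_sub_C, hdeg]
  have hsplits := IsAlgClosed.splits (p - C v)
  have hrcard : (p - C v).roots.card = 6 := by rw [splits_iff_card_roots.1 hsplits, hPdeg]
  -- comparing `∑ e = 6` with `∑ (e - 1) = 5` shows that `p - v` has one root
  have h1 : ∑ x ∈ (p - C v).roots.toFinset, ((criticalPoints p v).count x + 1) = 6 := by
    rw [← hrcard, ← Multiset.toFinset_sum_count_eq]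
    refine Finset.sum_congr rfl fun x hx => ?_
    have := Multiset.count_pos.2 (Multiset.mem_toFinset.1 hx)
    rw [count_roots] at this ⊢
    have := hcount x
    omega
  rw [Finset.sum_add_distrib, Multiset.sum_count_eq_card, h] at h1
  · have h2 : (p - C v).roots.toFinset.card = 1 := by
      simp only [Finset.sum_const, smul_eq_mul, mul_one] at h1
      omega
    obtain ⟨a, ha⟩ := Finset.card_eq_one.1 h2
    have hroots : (p - C v).roots = Multiset.replicate 6 a := by
      rw [Multiset.eq_replicate]
      refine ⟨hrcard, fun b hb => ?_⟩
      rw [← Multiset.mem_toFinset, ha] at hb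
      exact Finset.mem_singleton.1 hb
    have hprod := hsplits.eq_prod_roots
    rw [hroots, Multiset.map_replicate, Multiset.prod_replicate] at hprod
    refine no_five_of_comp p (C (p - C v).leadingCoeff * X ^ 2 + C v) ((X - C a) ^ 3) (by omega)
      ?_ ?_ ?_ hcard
    · simp only [add_comp, mul_comp, C_comp, pow_comp, X_comp]
      linear_combination hprod
    · refine lt_of_le_of_lt (b := 2) ?_ (by norm_num)
      compute_degree
    · rw [natDegree_pow, natDegree_X_sub_C]
      norm_num
  · intro x hx
    have := Multiset.count_pos.2 hx
    rw [hcount] at this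
    rw [Multiset.mem_toFinset, ← Multiset.count_pos, count_roots]
    omega

theorem exists_eq_of_rootMultiplicity_eq_four (p : ℂ[X]) (hdeg : p.natDegree = 6) (v a : ℂ)
    (ha : (p - C v).rootMultiplicity a = 4) :
    ∃ α β γ : ℂ, α ≠ 0 ∧
      p = C v + (X - C a) ^ 4 * (C α * (X - C a) ^ 2 + C β * (X - C a) + C γ) := by
  obtain ⟨Q, hQ⟩ := pow_rootMultiplicity_dvd (p - C v) a
  rw [ha] at hQ
  have hPdeg : (p - C v).natDegree = 6 := by rw [natDegree_sub_C, hdeg]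
  have hP0 : p - C v ≠ 0 := by
    intro h
    rw [h] at hPdeg
    simp at hPdeg
  have hQdeg : Q.natDegree = 2 := by
    have hQ0 : Q ≠ 0 := by
      rintro rfl
      exact hP0 (by rw [hQ, mul_zero])
    have h4 : (X - C a) ^ 4 ≠ 0 := pow_ne_zero 4 (X_sub_C_ne_zero a)
    rw [hQ, natDegree_mul h4 hQ0, natDegree_pow, natDegree_X_sub_C] at hPdeg
    omega
  have hQ2 : (Q.comp (X + C a)).natDegree = 2 := by
    rw [natDegree_comp, natDegree_X_add_C, hQdeg]
  have hquad := eq_quadratic_of_degree_le_two (natDegree_le_iff_degree_le.1 hQ2.le)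
  refine ⟨(Q.comp (X + C a)).coeff 2, (Q.comp (X + C a)).coeff 1, (Q.comp (X + C a)).coeff 0,
    ?_, ?_⟩
  rotate_left
  · have hback : Q = (Q.comp (X + C a)).comp (X - C a) := by
      rw [comp_assoc]
      simp
    rw [hquad] at hback
    simp only [add_comp, mul_comp, C_comp, pow_comp, X_comp] at hback
    rw [← hback, ← hQ]
    ring
  · rw [← hQ2, coeff_natDegree, leadingCoeff_ne_zero]
    intro h
    rw [h] at hQ2
    simp at hQ2

/-! ### The normal form -/

/-- Let `f(y) = y ^ 4 * (α * y ^ 2 + β * y + γ)` have two distinct nonzero critical points `d`, `e`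
with the same value. Since `d` and `e` are the roots of `6 * α * y ^ 2 + 5 * β * y + 4 * γ`, the
coefficients `β` and `γ` are determined by them, and `f(d) = f(e)` becomes
`α * (d - e) ^ 3 * (d + e) * (2 * d ^ 2 + d * e + 2 * e ^ 2) = 0`. -/
theorem normal_form_algebra {α β γ d e : ℂ} (hα : α ≠ 0) (he : e ≠ 0) (hde : d ≠ e)
    (hd' : 6 * α * d ^ 2 + 5 * β * d + 4 * γ = 0) (he' : 6 * α * e ^ 2 + 5 * β * e + 4 * γ = 0)
    (heq : d ^ 4 * (α * d ^ 2 + β * d + γ) = e ^ 4 * (α * e ^ 2 + β * e + γ)) :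
    β = 0 ∨ ∃ μ : ℂ, μ ≠ 0 ∧ β = 6 * α * μ ∧ γ = 25 * α * μ ^ 2 := by
  have hsub : d - e ≠ 0 := sub_ne_zero.2 hde
  have hβ : β = -(6 / 5) * α * (d + e) := by
    apply mul_left_cancel₀ hsub
    linear_combination (1 / 5) * hd' - (1 / 5) * he'
  have hγ : γ = (3 / 2) * α * d * e := by
    linear_combination (1 / 4) * hd' - (5 / 4) * d * hβ
  have hprod : (α * (d - e) ^ 3) * ((d + e) * (2 * d ^ 2 + d * e + 2 * e ^ 2)) = 0 := by
    rw [hβ, hγ] at heq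
    linear_combination (-10) * heq
  rcases mul_eq_zero.1 ((mul_eq_zero.1 hprod).resolve_left
    (mul_ne_zero hα (pow_ne_zero 3 hsub))) with h | h
  · left
    rw [hβ, h, mul_zero]
  · right
    refine ⟨-(d + e) / 5, ?_, ?_, ?_⟩
    · intro h0
      have h1 : d = -e := by linear_combination (-5) * h0
      rw [h1] at h
      have h2 : e ^ 2 = 0 := by linear_combination (1 / 3) * h
      exact he (pow_eq_zero_iff two_ne_zero |>.1 h2)
    · rw [hβ]; ring
    · rw [hγ]; linear_combination (-α / 2) * h

/-- The normal form in degree `6`, using only that the monodromy group has order `120`. -/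
theorem normal_form (p : ℂ[X]) (hdeg : p.natDegree = 6)
    (hcard : Nat.card (genericFiber p).Gal = 120) :
    ∃ a b c d : ℂ, a ≠ 0 ∧ c ≠ 0 ∧
      p = (C a * X + C b).comp
        ((X ^ 4 * (X ^ 2 + C (6 : ℂ) * X + C (25 : ℂ))).comp (C c * X + C d)) := by
  classical
  have hMcount : ∀ v, ((derivative p).roots.map fun x => eval x p).count v =
      (criticalPoints p v).card := by
    intro v
    rw [Multiset.count_map, criticalPoints]
    congr 1
    exact Multiset.filter_congr fun x _ => eq_comm
  have hMcard : ((derivative p).roots.map fun x => eval x p).card = 5 := by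
    rw [Multiset.card_map, splits_iff_card_roots.1 (IsAlgClosed.splits (derivative p)),
      natDegree_derivative, hdeg]
  obtain ⟨v, hv⟩ | ⟨v, w, hvw, hv, hw⟩ := counts_of_card_five _ hMcard fun v => by
    rw [hMcount]
    exact card_criticalPoints_ne_one p hdeg hcard v
  · rw [hMcount] at hv
    exact absurd hv (card_criticalPoints_ne_five p hdeg hcard v)
  rw [hMcount] at hv hw
  obtain ⟨a, ha⟩ := exists_of_card_criticalPoints_eq_three p hdeg hcard v hv
  obtain ⟨x, hx, y, hy, hxy⟩ := exists_of_card_criticalPoints_eq_two p hdeg hcard w hw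
  obtain ⟨α, β, γ, hα, hp⟩ := exists_eq_of_rootMultiplicity_eq_four p hdeg v a ha
  have heval : ∀ z, eval z p =
      v + (z - a) ^ 4 * (α * (z - a) ^ 2 + β * (z - a) + γ) := by
    intro z
    rw [hp]
    simp
  have hderiv : ∀ z, eval z (derivative p) =
      (z - a) ^ 3 * (6 * α * (z - a) ^ 2 + 5 * β * (z - a) + 4 * γ) := by
    intro z
    rw [hp]
    simp [derivative_pow]
    ring
  have hcrit : ∀ z ∈ criticalPoints p w, z - a ≠ 0 ∧ eval z p = w ∧
      6 * α * (z - a) ^ 2 + 5 * β * (z - a) + 4 * γ = 0 := by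
    intro z hz
    rw [criticalPoints, Multiset.mem_filter] at hz
    have hza : z - a ≠ 0 := by
      intro h
      apply hvw
      rw [← hz.2, heval, h]
      ring
    refine ⟨hza, hz.2, ?_⟩
    have := isRoot_of_mem_roots hz.1
    rw [IsRoot.def, hderiv] at this
    exact (mul_eq_zero.1 this).resolve_left (pow_ne_zero 3 hza)
  obtain ⟨-, hxw, hx'⟩ := hcrit x hx
  obtain ⟨hy0, hyw, hy'⟩ := hcrit y hy
  rw [heval] at hxw hyw
  rcases normal_form_algebra hα hy0 (fun h => hxy (sub_left_injective h)) hx' hy'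
    (by linear_combination hxw - hyw) with hβ | ⟨μ, hμ, hβ, hγ⟩
  · exfalso
    refine no_five_of_comp p (C v + X ^ 2 * (C α * X + C γ)) ((X - C a) ^ 2) (by omega) ?_ ?_ ?_
      hcard
    · rw [hp, hβ]
      simp only [add_comp, mul_comp, C_comp, pow_comp, X_comp, map_zero]
      ring
    · refine lt_of_le_of_lt (b := 3) ?_ (by norm_num)
      compute_degree
    · rw [natDegree_pow, natDegree_X_sub_C]
      norm_num
  · refine ⟨α * μ ^ 6, v, μ⁻¹, -a * μ⁻¹, mul_ne_zero hα (pow_ne_zero 6 hμ), inv_ne_zero hμ, ?_⟩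
    apply Polynomial.funext
    intro z
    rw [heval, hβ, hγ]
    simp only [eval_comp, eval_add, eval_mul, eval_C, eval_X, eval_pow]
    field_simp
    ring

/-- A complex polynomial of degree `6` whose monodromy group is isomorphic to
`PGL₂(𝔽₅)` can be brought, by affine changes of variables, to the form
`X⁴(X² + 6X + 25)`. -/
theorem deg6_pgl25_affine_normal_form (p : Polynomial ℂ) (hdeg : p.natDegree = 6)
    (hgal : Nonempty
      (monodromyGroup p ≃*
        (Matrix.GeneralLinearGroup (Fin 2) (ZMod 5) ⧸
          Subgroup.center (Matrix.GeneralLinearGroup (Fin 2) (ZMod 5))))) :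
    ∃ a b c d : ℂ, a ≠ 0 ∧ c ≠ 0 ∧
      p = (C a * X + C b).comp
        ((X ^ 4 * (X ^ 2 + C (6 : ℂ) * X + C (25 : ℂ))).comp (C c * X + C d)) := by
  obtain ⟨e⟩ := hgal
  exact normal_form p hdeg ((Nat.card_congr e.toEquiv).trans card_PGL)
end
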